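/- Let (X_n) be a Markov chain on (-∞, M] satisfying the minorization condition P(x,A) ≥ α·ℓ(A) (ℓ uniform on [-h,h]) and the zero conditional mean condition, and let O_n = S_{L_n} be the overshoot process over level 0 (i.e., θ̲ = θ̄ = 0 in the crossing-time construction). Then there exists a probability measure υ on (0,∞) such that Law(O_n) → υ in total variation at a geometric rate, and for every bounded measurable φ : (0,∞) → ℝ, (1/n)Σ_{j=1}^n φ(O_j) → ∫ φ dυ almost surely. -/

import Mathlib

open MeasureTheory ProbabilityTheory Filter Set

/-- Normalized Lebesgue measure on `[-h, h]`. -/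
noncomputable def unifIcc (h : ℝ) : Measure ℝ :=
  (ENNReal.ofReal (2 * h))⁻¹ • (volume.restrict (Set.Icc (-h) h))

/-- The random walk `S n = S₀ + X₁ + ⋯ + Xₙ` along a trajectory. -/
noncomputable def Swalk {Ω : Type*} (X : ℕ → Ω → ℝ) (S0 : Ω → ℝ) (ω : Ω) : ℕ → ℝ :=
  fun n => S0 ω + ∑ k ∈ Finset.Icc 1 n, X k ω

/-- The alternating crossing times `(Tₙ, Lₙ)` of the levels `θlo < 0 < θhi`:
`L₀ = 0`, `T_{n+1} = min{k > Lₙ : S k < θlo}`, `L_{n+1} = min{k > T_{n+1} : S k > θhi}`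
(`sInf` of an empty set of naturals being `0` by convention). -/
noncomputable def crossTimes (θlo θhi : ℝ) (S : ℕ → ℝ) : ℕ → ℕ × ℕ
  | 0 => (0, 0)
  | n + 1 =>
      let T := sInf {k | (crossTimes θlo θhi S n).2 < k ∧ S k < θlo}
      (T, sInf {k | T < k ∧ θhi < S k})

/-- The overshoot process over level `0`: `O₀ = max(S₀, 0)`, `Oₙ = S_{Lₙ}` where `Lₙ` are
the successive up-crossing times of level `0` (i.e. `θlo = θhi = 0`). -/
noncomputable def Oproc {Ω : Type*} (X : ℕ → Ω → ℝ) (S0 : Ω → ℝ) (n : ℕ) (ω : Ω) : ℝ :=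
  if n = 0 then max (S0 ω) 0
  else Swalk X S0 ω ((crossTimes 0 0 (Swalk X S0 ω) n).2)

/-!
The pair (last increment, position) of the walk is a Markov chain. It almost surely leaves each of
the half planes of nonnegative and of nonpositive positions: the walk is a martingale whose
increments are bounded above and, by Doeblin's theorem, uniformly ergodic, so its distance from `0`
grows sublinearly on average, whereas a positive probability of never leaving would force linear
growth. The states at the up-crossings of level `0` therefore form a Markov chain themselves. Its
transitions from overshoots in `[0, M]` have a common minorant, since the walk can descend to
`[0, h/4]` in steps of size at least `h/8`, undershoot `0` and jump back above it in one step, each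
with a density bounded below. By Doeblin's theorem again this chain is uniformly and geometrically
ergodic, and the overshoot is a function of its state. The decay of correlations yields the law of
large numbers, first along the squares, where the second moments of the averages are summable, and
then along all times by monotonicity.
-/

section Doeblin

variable {E : Type*} [MeasurableSpace E]

lemma abs_integral_sub_integral_le_of_le {μ ν σ : Measure E} [IsProbabilityMeasure μ]
    [IsProbabilityMeasure ν] (hμ : σ ≤ μ) (hν : σ ≤ ν) {g : E → ℝ} (hg : Measurable g) {a b : ℝ}
    (hgab : ∀ z, g z ∈ Icc a b) :
    |∫ z, g z ∂μ - ∫ z, g z ∂ν| ≤ (b - a) * (1 - σ.real univ) := by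
  have key : ∀ ρ : Measure E, IsProbabilityMeasure ρ → σ ≤ ρ →
      ∫ z, g z ∂ρ ∈ Icc (∫ z, g z ∂σ + a * (1 - σ.real univ))
        (∫ z, g z ∂σ + b * (1 - σ.real univ)) := by
    intro ρ _ hρ
    have : IsFiniteMeasure σ := isFiniteMeasure_of_le ρ hρ
    have hint : ∀ (τ : Measure E) [IsFiniteMeasure τ], Integrable g τ := fun τ _ =>
      .of_mem_Icc a b hg.aemeasurable (ae_of_all _ hgab)
    have hsplit : ∫ z, g z ∂ρ = ∫ z, g z ∂(ρ - σ) + ∫ z, g z ∂σ := by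
      rw [← integral_add_measure (hint _) (hint _), Measure.sub_add_cancel_of_le hρ]
    have hone : ρ.real univ = 1 := probReal_univ
    have hmass : (ρ - σ).real univ = 1 - σ.real univ := by
      rw [← Measure.sub_add_cancel_of_le hρ, measureReal_add_apply] at hone
      linarith
    have hlow : a * (ρ - σ).real univ ≤ ∫ z, g z ∂(ρ - σ) := by
      simpa [mul_comm] using
        integral_mono (integrable_const a) (hint (ρ - σ)) fun z => (hgab z).1
    have hupp : ∫ z, g z ∂(ρ - σ) ≤ b * (ρ - σ).real univ := by
      simpa [mul_comm] using
        integral_mono (hint (ρ - σ)) (integrable_const b) fun z => (hgab z).2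
    rw [hmass] at hlow hupp
    constructor <;> linarith
  have hμ' := key μ inferInstance hμ
  have hν' := key ν inferInstance hν
  rw [abs_le]
  constructor <;> linarith [hμ'.1, hμ'.2, hν'.1, hν'.2]

instance isMarkovKernel_pow (Q : Kernel E E) [IsMarkovKernel Q] (n : ℕ) :
    IsMarkovKernel (Q ^ n) := by
  induction n with
  | zero => exact inferInstanceAs (IsMarkovKernel Kernel.id)
  | succ n ih => exact inferInstanceAs (IsMarkovKernel ((Q ^ n) ∘ₖ Q))

/-- The powers of `Q` converge to `π`, uniformly over starting points, at the geometric rate `r`.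
Bounded functions are used in place of sets: the two are equivalent, and indicators recover the
total variation distance. -/
def UniformlyErgodic (Q : Kernel E E) (π : Measure E) (r : ℝ) : Prop :=
  ∀ (n : ℕ) (y : E) (g : E → ℝ) (a b : ℝ), Measurable g → (∀ z, g z ∈ Icc a b) →
    |∫ z, g z ∂((Q ^ n) y) - ∫ z, g z ∂π| ≤ (b - a) * r ^ n

lemma pow_comp_of_invariant {Q : Kernel E E} {π : Measure E} (hπ : Kernel.Invariant Q π) (n : ℕ) :
    (Q ^ n) ∘ₘ π = π := by
  induction n with
  | zero => exact Measure.id_comp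
  | succ n ih =>
    calc (Q ^ (n + 1)) ∘ₘ π = (Q ^ n) ∘ₘ (Q ∘ₘ π) := Measure.comp_assoc.symm
      _ = π := by rw [hπ.def, ih]

/-- The part of the transitions of `Q` left over by the uniform minorant `ν`. -/
noncomputable def residualKernel (Q : Kernel E E) [IsFiniteKernel Q] (ν : Measure E)
    [IsFiniteMeasure ν] (hν : ∀ y, ν ≤ Q y) : Kernel E E where
  toFun y := Q y - ν
  measurable' := Measure.measurable_of_measurable_coe _ fun A hA => by
    simpa only [Measure.sub_apply hA (hν _)] using (Q.measurable_coe hA).sub_const _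

variable {Q : Kernel E E} [IsMarkovKernel Q] {ν : Measure E} [IsFiniteMeasure ν]

lemma comp_eq_add_residualKernel_comp (hν : ∀ y, ν ≤ Q y) (m : Measure E)
    [IsProbabilityMeasure m] : Q ∘ₘ m = ν + residualKernel Q ν hν ∘ₘ m := by
  have hQ : Q = Kernel.const E ν + residualKernel Q ν hν := by
    ext1 y
    exact ((add_comm _ _).trans (Measure.sub_add_cancel_of_le (hν y))).symm
  nth_rewrite 1 [hQ]
  rw [Measure.add_comp, Measure.const_comp, measure_univ, one_smul]

lemma residualKernel_comp_apply_univ (hν : ∀ y, ν ≤ Q y) (m : Measure E) :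
    (residualKernel Q ν hν ∘ₘ m) univ = (1 - ν univ) * m univ := by
  have : ∀ y, residualKernel Q ν hν y univ = 1 - ν univ := fun y => by
    rw [← measure_univ (μ := Q y), ← Measure.sub_apply .univ (hν y)]; rfl
  simp [Measure.bind_apply .univ (Kernel.aemeasurable _), this]

lemma exists_forall_le_pow_comp (hν : ∀ y, ν ≤ Q y) (hν1 : ν univ ≤ 1) (n : ℕ) :
    ∃ σ : Measure E, σ univ + (1 - ν univ) ^ n = 1 ∧
      ∀ m : Measure E, IsProbabilityMeasure m → σ ≤ (Q ^ n) ∘ₘ m := by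
  induction n with
  | zero => exact ⟨0, by simp, fun m _ => Measure.zero_le _⟩
  | succ n ih =>
    obtain ⟨σ, hσ, hle⟩ := ih
    refine ⟨ν + residualKernel Q ν hν ∘ₘ σ, ?_, fun m hm => ?_⟩
    · rw [Measure.add_apply, residualKernel_comp_apply_univ, pow_succ', add_assoc, ← mul_add, hσ,
        mul_one, add_tsub_cancel_of_le hν1]
    · have hstep : (Q ^ (n + 1)) ∘ₘ m = Q ∘ₘ ((Q ^ n) ∘ₘ m) := by
        rw [Measure.comp_assoc, pow_succ']; rfl
      rw [hstep, comp_eq_add_residualKernel_comp hν]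
      gcongr
      refine Measure.le_iff.2 fun A hA => ?_
      simpa only [Measure.bind_apply hA (Kernel.aemeasurable _)] using
        lintegral_mono' (hle m hm) le_rfl

lemma exists_invariant [Nonempty E] (hν : ∀ y, ν ≤ Q y) (hν0 : ν ≠ 0) (hν1 : ν univ ≤ 1) :
    ∃ π : Measure E, IsProbabilityMeasure π ∧ Kernel.Invariant Q π := by
  let τ : ℕ → Measure E := fun k => (fun m => residualKernel Q ν hν ∘ₘ m)^[k] ν
  have hτ : ∀ k, τ (k + 1) = residualKernel Q ν hν ∘ₘ τ k :=
    fun k => Function.iterate_succ_apply' _ k ν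
  have hmass : ∀ k, τ k univ = (1 - ν univ) ^ k * ν univ := fun k => by
    induction k with
    | zero => simp [τ]
    | succ k ih => rw [hτ, residualKernel_comp_apply_univ, ih, pow_succ', mul_assoc]
  have hprob : IsProbabilityMeasure (Measure.sum τ) := ⟨by
    rw [Measure.sum_apply _ .univ, tsum_congr hmass, ENNReal.tsum_mul_right, ENNReal.tsum_geometric,
      ENNReal.sub_sub_cancel ENNReal.one_ne_top hν1]
    exact ENNReal.inv_mul_cancel (by simpa using hν0) (measure_ne_top ν _)⟩
  refine ⟨Measure.sum τ, hprob, ?_⟩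
  calc Q ∘ₘ Measure.sum τ = ν + Measure.sum fun k => τ (k + 1) := by
        rw [comp_eq_add_residualKernel_comp hν, Measure.bind_sum _ _ (Kernel.aemeasurable _)]
        simp only [hτ, τ]
    _ = Measure.sum τ := by
        ext A hA
        rw [Measure.add_apply, Measure.sum_apply _ hA, Measure.sum_apply _ hA,
          tsum_eq_zero_add' (f := fun k => τ k A) ENNReal.summable]
        rfl

theorem exists_uniformlyErgodic [Nonempty E] (hν : ∀ y, ν ≤ Q y) (hν0 : ν ≠ 0) :
    ∃ (π : Measure E) (r : ℝ), IsProbabilityMeasure π ∧ 0 ≤ r ∧ r < 1 ∧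
      UniformlyErgodic Q π r := by
  have hν1 : ν univ ≤ 1 := by simpa using hν (Classical.arbitrary E) univ
  obtain ⟨π, hπ, hinv⟩ := exists_invariant hν hν0 hν1
  have hreal1 : ν.real univ ≤ 1 := ENNReal.toReal_le_of_le_ofReal one_pos.le (by simpa using hν1)
  have hreal0 : 0 < ν.real univ := ENNReal.toReal_pos (by simpa using hν0) (by finiteness)
  refine ⟨π, 1 - ν.real univ, hπ, by linarith, by linarith, fun n y g a b hg hgab => ?_⟩
  obtain ⟨σ, hσ, hle⟩ := exists_forall_le_pow_comp hν hν1 n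
  have hσy := hle (Measure.dirac y) inferInstance
  have hσπ := hle π hπ
  rw [Measure.dirac_bind (Kernel.measurable _)] at hσy
  rw [pow_comp_of_invariant hinv] at hσπ
  have hmass : 1 - σ.real univ = (1 - ν.real univ) ^ n := by
    have : IsFiniteMeasure σ := isFiniteMeasure_of_le π hσπ
    have hsum := congrArg ENNReal.toReal hσ
    rw [ENNReal.toReal_add (by finiteness) (by finiteness), ENNReal.toReal_pow,
      ENNReal.toReal_sub_of_le hν1 ENNReal.one_ne_top, ENNReal.toReal_one] at hsum
    exact sub_eq_of_eq_add' hsum.symm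
  exact (abs_integral_sub_integral_le_of_le hσy hσπ hg hgab).trans_eq (by rw [hmass])

end Doeblin

section Survival

variable {E : Type*} [MeasurableSpace E]

lemma pow_zero_apply (K : Kernel E E) (z : E) : (K ^ 0) z = Measure.dirac z := Kernel.id_apply z

lemma lintegral_pow_succ (K : Kernel E E) (n : ℕ) (z : E) {f : E → ENNReal} (hf : Measurable f) :
    ∫⁻ y, f y ∂((K ^ (n + 1)) z) = ∫⁻ y, ∫⁻ x, f x ∂((K ^ n) y) ∂(K z) :=
  Kernel.lintegral_comp (K ^ n) K z hf

lemma lintegral_pow_succ' (K : Kernel E E) (n : ℕ) (z : E) {f : E → ENNReal} (hf : Measurable f) :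
    ∫⁻ y, f y ∂((K ^ (n + 1)) z) = ∫⁻ y, ∫⁻ x, f x ∂(K y) ∂((K ^ n) z) := by
  rw [pow_succ']
  exact Kernel.lintegral_comp K (K ^ n) z hf

lemma pow_succ_apply_univ (K : Kernel E E) (n : ℕ) (z : E) :
    (K ^ (n + 1)) z univ = ∫⁻ y, (K ^ n) y univ ∂(K z) :=
  Kernel.comp_apply' (K ^ n) K z .univ

lemma pow_succ_apply_univ' (K : Kernel E E) (n : ℕ) (z : E) :
    (K ^ (n + 1)) z univ = ∫⁻ y, K y univ ∂((K ^ n) z) := by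
  rw [pow_succ']
  exact Kernel.comp_apply' K (K ^ n) z .univ

/-- The probability that the chain with sub-Markov transition kernel `K` is never killed. -/
noncomputable def survival (K : Kernel E E) (z : E) : ENNReal := ⨅ n : ℕ, (K ^ n) z univ

lemma measurable_survival (K : Kernel E E) : Measurable (survival K) :=
  .iInf fun n => (K ^ n).measurable_coe .univ

variable {K : Kernel E E}

lemma antitone_pow_apply_univ (hK : ∀ z, K z univ ≤ 1) (z : E) :
    Antitone fun n => (K ^ n) z univ := by
  refine antitone_nat_of_succ_le fun n => ?_
  calc (K ^ (n + 1)) z univ = ∫⁻ y, K y univ ∂((K ^ n) z) := pow_succ_apply_univ' K n z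
    _ ≤ ∫⁻ _, 1 ∂((K ^ n) z) := lintegral_mono hK
    _ = (K ^ n) z univ := lintegral_one

lemma pow_apply_univ_le_one (hK : ∀ z, K z univ ≤ 1) (n : ℕ) (z : E) : (K ^ n) z univ ≤ 1 :=
  (antitone_pow_apply_univ hK z n.zero_le).trans_eq (by simp only [pow_zero_apply, measure_univ])

lemma survival_le_one (hK : ∀ z, K z univ ≤ 1) (z : E) : survival K z ≤ 1 :=
  iInf_le_of_le 0 (pow_apply_univ_le_one hK 0 z)

lemma tendsto_pow_apply_univ (hK : ∀ z, K z univ ≤ 1) (z : E) :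
    Tendsto (fun n => (K ^ n) z univ) atTop (nhds (survival K z)) :=
  tendsto_atTop_iInf (antitone_pow_apply_univ hK z)

lemma survival_eq_lintegral (hK : ∀ z, K z univ ≤ 1) (z : E) :
    survival K z = ∫⁻ y, survival K y ∂(K z) := by
  have hfin : ∫⁻ y, (K ^ 0) y univ ∂(K z) ≠ ⊤ := by
    rw [← pow_succ_apply_univ]
    exact ne_top_of_le_ne_top ENNReal.one_ne_top (pow_apply_univ_le_one hK 1 z)
  calc survival K z = ⨅ n : ℕ, (K ^ (n + 1)) z univ :=
        ((antitone_pow_apply_univ hK z).iInf_nat_add 1).symm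
    _ = ⨅ n : ℕ, ∫⁻ y, (K ^ n) y univ ∂(K z) := iInf_congr fun n => pow_succ_apply_univ K n z
    _ = ∫⁻ y, survival K y ∂(K z) :=
        (lintegral_iInf (fun n => (K ^ n).measurable_coe .univ)
          (fun _ _ h y => antitone_pow_apply_univ hK y h) hfin).symm

lemma survival_eq_lintegral_pow (hK : ∀ z, K z univ ≤ 1) (n : ℕ) (z : E) :
    survival K z = ∫⁻ y, survival K y ∂((K ^ n) z) := by
  induction n with
  | zero => rw [pow_zero_apply, lintegral_dirac' z (measurable_survival K)]
  | succ n ih =>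
    rw [lintegral_pow_succ' K n z (measurable_survival K), ih]
    exact lintegral_congr (survival_eq_lintegral hK)

lemma iSup_survival_eq_one (hK : ∀ z, K z univ ≤ 1) {z₀ : E} (hz₀ : survival K z₀ ≠ 0) :
    ⨆ z, survival K z = 1 := by
  set q := ⨆ z, survival K z
  have hq1 : q ≤ 1 := iSup_le (survival_le_one hK)
  refine le_antisymm hq1 (le_of_not_gt fun hlt => hz₀ ?_)
  have hmul : ∀ n, survival K z₀ ≤ q * (K ^ n) z₀ univ := fun n => by
    rw [survival_eq_lintegral_pow hK n, ← lintegral_const]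
    exact lintegral_mono (le_iSup (survival K))
  have hle : survival K z₀ ≤ q * survival K z₀ := by
    have := (ENNReal.Tendsto.const_mul (tendsto_pow_apply_univ hK z₀)
      (.inr (ne_top_of_le_ne_top ENNReal.one_ne_top hq1)))
    exact ge_of_tendsto' this hmul
  by_contra h0
  have hw1 := ne_top_of_le_ne_top ENNReal.one_ne_top (survival_le_one hK z₀)
  have : q * survival K z₀ < 1 * survival K z₀ := ENNReal.mul_lt_mul_left h0 hw1 hlt
  rw [one_mul] at this
  exact absurd hle this.not_ge

end Survival

section Exit

variable {E : Type*} [MeasurableSpace E] {B : Set E}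

/-- The law of the position of the chain with transition kernel `T` when it first is, at a positive
time, outside `B`; the starting point itself need not be in `B`. -/
noncomputable def exitKernel (T : Kernel E E) (hB : MeasurableSet B) : Kernel E E :=
  Kernel.sum fun n => (T.restrict hB.compl) ∘ₖ ((T.restrict hB) ^ n)

lemma lintegral_exitKernel (T : Kernel E E) (hB : MeasurableSet B) {f : E → ENNReal}
    (hf : Measurable f) (z : E) :
    ∫⁻ y, f y ∂(exitKernel T hB z)
      = ∑' n, ∫⁻ y, ∫⁻ x in Bᶜ, f x ∂(T y) ∂(((T.restrict hB) ^ n) z) := by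
  simp only [exitKernel, Kernel.sum_apply, lintegral_sum_measure, Kernel.lintegral_comp _ _ _ hf,
    Kernel.lintegral_restrict]

lemma lintegral_exitKernel_eq_add (T : Kernel E E) [IsSFiniteKernel T] (hB : MeasurableSet B)
    {f : E → ENNReal} (hf : Measurable f) (z : E) :
    ∫⁻ y, f y ∂(exitKernel T hB z)
      = ∫⁻ y in Bᶜ, f y ∂(T z) + ∫⁻ y in B, ∫⁻ x, f x ∂(exitKernel T hB y) ∂(T z) := by
  have hmeas : Measurable fun y => ∫⁻ x in Bᶜ, f x ∂(T y) := hf.setLIntegral_kernel hB.compl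
  simp_rw [lintegral_exitKernel T hB hf]
  rw [tsum_eq_zero_add' ENNReal.summable, ← Kernel.lintegral_restrict T hB,
    lintegral_tsum fun n => (hmeas.lintegral_kernel).aemeasurable]
  congr 1
  · exact lintegral_dirac' z hmeas
  · exact tsum_congr fun n => lintegral_pow_succ _ n z hmeas

lemma restrict_apply_univ_le_one (T : Kernel E E) [IsMarkovKernel T] (hB : MeasurableSet B)
    (z : E) :
    T.restrict hB z univ ≤ 1 := by
  rw [Kernel.restrict_apply, Measure.restrict_apply_univ]
  exact prob_le_one

lemma isMarkovKernel_exitKernel {T : Kernel E E} [IsMarkovKernel T] (hB : MeasurableSet B)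
    (h0 : ∀ z, survival (T.restrict hB) z = 0) : IsMarkovKernel (exitKernel T hB) := by
  set K := T.restrict hB with hK
  have hpart : ∀ N z, ∑ n ∈ Finset.range N, ∫⁻ y, T y Bᶜ ∂((K ^ n) z) + (K ^ N) z univ = 1 := by
    intro N z
    induction N with
    | zero => rw [Finset.sum_range_zero, zero_add, pow_zero_apply, measure_univ]
    | succ N ih =>
      have hsplit : ∫⁻ y, T y Bᶜ ∂((K ^ N) z) + (K ^ (N + 1)) z univ = (K ^ N) z univ := by
        rw [pow_succ_apply_univ', ← lintegral_add_left (T.measurable_coe hB.compl), ← lintegral_one]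
        refine lintegral_congr fun y => ?_
        rw [hK, Kernel.restrict_apply, Measure.restrict_apply_univ, add_comm,
          prob_add_prob_compl hB]
      rw [Finset.sum_range_succ, add_assoc, hsplit, ih]
  refine ⟨fun z => ⟨?_⟩⟩
  have hlim :=
    (ENNReal.summable.hasSum (f := fun n => ∫⁻ y, T y Bᶜ ∂((K ^ n) z))).tendsto_sum_nat.add
      (tendsto_pow_apply_univ (restrict_apply_univ_le_one T hB) z)
  simp_rw [← hK, hpart, h0, add_zero] at hlim
  rw [← lintegral_one, lintegral_exitKernel T hB measurable_const]
  simpa only [lintegral_one, Measure.restrict_apply_univ] using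
    (tendsto_nhds_unique tendsto_const_nhds hlim).symm

end Exit

section WalkKernel

/-- The transition kernel of the pair (last increment, position) of a random walk whose increments
form a chain with kernel `P` and are multiplied by `σ` before being added to the position. The
value `σ = -1` describes the reflected walk. -/
noncomputable def walkKernel (P : Kernel ℝ ℝ) (σ : ℝ) : Kernel (ℝ × ℝ) (ℝ × ℝ) :=
  (Kernel.id ×ₖ P.comap Prod.fst measurable_fst).map fun p => (p.2, p.1.2 + σ * p.2)

variable (P : Kernel ℝ ℝ) [IsMarkovKernel P] (σ : ℝ)

instance isMarkovKernel_walkKernel : IsMarkovKernel (walkKernel P σ) :=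
  Kernel.IsMarkovKernel.map _ (by fun_prop)

lemma walkKernel_apply (z : ℝ × ℝ) :
    walkKernel P σ z = (P z.1).map fun y => (y, z.2 + σ * y) := by
  rw [walkKernel, Kernel.map_apply _ (by fun_prop), Kernel.prod_apply, Kernel.id_apply,
    Kernel.comap_apply, Measure.dirac_prod, Measure.map_map (by fun_prop) (by fun_prop)]
  rfl

lemma lintegral_walkKernel {f : ℝ × ℝ → ENNReal} (hf : Measurable f) (z : ℝ × ℝ) :
    ∫⁻ y, f y ∂(walkKernel P σ z) = ∫⁻ y, f (y, z.2 + σ * y) ∂(P z.1) := by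
  rw [walkKernel_apply, lintegral_map hf (by fun_prop)]

lemma lintegral_walkKernel_pow_fst {f : ℝ → ENNReal} (hf : Measurable f) (n : ℕ) (z : ℝ × ℝ) :
    ∫⁻ y, f y.1 ∂((walkKernel P σ ^ n) z) = ∫⁻ x, f x ∂((P ^ n) z.1) := by
  have hf1 : Measurable fun y : ℝ × ℝ => f y.1 := hf.comp measurable_fst
  induction n generalizing z with
  | zero => simp only [pow_zero_apply, lintegral_dirac' _ hf, lintegral_dirac' _ hf1]
  | succ n ih =>
    rw [lintegral_pow_succ _ n z hf1, lintegral_pow_succ _ n z.1 hf]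
    simp_rw [ih]
    exact lintegral_walkKernel P σ ((hf.lintegral_kernel).comp measurable_fst) z

end WalkKernel

/-- A kernel of increments as in the theorem, made global: from every state the next increment is
at most `M`, has mean zero, and dominates `c` times Lebesgue measure on `[-h, h]`. -/
structure IsCenteredMinorized (P : Kernel ℝ ℝ) (M h : ℝ) (c : ENNReal) : Prop where
  pos_bound : 0 < M
  pos_width : 0 < h
  const_ne_zero : c ≠ 0
  apply_Ioi : ∀ x, P x (Ioi M) = 0
  smul_volume_le : ∀ x, c • volume.restrict (Icc (-h) h) ≤ P x
  integrable : ∀ x, Integrable (fun y => y) (P x)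
  mean_eq_zero : ∀ x, ∫ y, y ∂(P x) = 0

/-- A smooth function `ψ_L` lying above the positive part, with `ψ_L'' ≤ 1 / (2 L)`. -/
noncomputable def softPos (L t : ℝ) : ℝ := (t + √(t ^ 2 + L ^ 2)) / 2

lemma softPos_neg (L t : ℝ) : softPos L (-t) = softPos L t - t := by
  unfold softPos
  rw [neg_sq]
  ring

lemma continuous_softPos (L : ℝ) : Continuous (softPos L) := by
  unfold softPos
  fun_prop

lemma abs_le_sqrt_sq_add_sq (L t : ℝ) : |t| ≤ √(t ^ 2 + L ^ 2) :=
  Real.abs_le_sqrt (le_add_of_nonneg_right (sq_nonneg L))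

lemma softPos_nonneg (L t : ℝ) : 0 ≤ softPos L t := by
  unfold softPos
  linarith [abs_le_sqrt_sq_add_sq L t, neg_abs_le t]

lemma le_softPos (L t : ℝ) : t ≤ softPos L t := by
  have := softPos_nonneg L (-t)
  rw [softPos_neg] at this
  linarith

lemma softPos_le {L : ℝ} (hL : 0 ≤ L) (t : ℝ) : softPos L t ≤ |t| + L := by
  have : √(t ^ 2 + L ^ 2) ≤ |t| + L :=
    (Real.sqrt_le_left (by positivity)).2 (by nlinarith [sq_abs t, abs_nonneg t])
  unfold softPos
  linarith [le_abs_self t]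

lemma softPos_monotone (L : ℝ) : Monotone (softPos L) := by
  intro s t hst
  have hroot : √(s ^ 2 + L ^ 2) ≤ √(t ^ 2 + L ^ 2) + (t - s) := by
    refine (Real.sqrt_le_left (by positivity)).2 ?_
    nlinarith [Real.sq_sqrt (show 0 ≤ t ^ 2 + L ^ 2 by positivity), abs_le_sqrt_sq_add_sq L t,
      neg_abs_le t]
  unfold softPos
  linarith

lemma exists_softPos_add_le {L : ℝ} (hL : 0 < L) (t : ℝ) : ∃ c ≤ 1,
    ∀ z, softPos L (t + z) ≤ softPos L t + c * z + z ^ 2 / (4 * L) := by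
  set p := √(t ^ 2 + L ^ 2) with hp
  have hLp : L ≤ p := Real.le_sqrt_of_sq_le (by nlinarith [sq_nonneg t])
  have hp0 : 0 < p := hL.trans_le hLp
  have htp : |t / p| ≤ 1 := by
    rw [abs_div, abs_of_pos hp0, div_le_one hp0]
    exact abs_le_sqrt_sq_add_sq L t
  refine ⟨(1 + t / p) / 2, by linarith [(abs_le.1 htp).2], fun z => ?_⟩
  have hpp : p ^ 2 = t ^ 2 + L ^ 2 := Real.sq_sqrt (by positivity)
  have hroot : √((t + z) ^ 2 + L ^ 2) ≤ p + t / p * z + z ^ 2 / (2 * L) :=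
    calc √((t + z) ^ 2 + L ^ 2) ≤ (((t + z) ^ 2 + L ^ 2) / p + p) / 2 := by
          rw [le_div_iff₀ two_pos, div_add' _ _ _ hp0.ne', le_div_iff₀ hp0]
          nlinarith [sq_nonneg (√((t + z) ^ 2 + L ^ 2) - p),
            Real.sq_sqrt (show 0 ≤ (t + z) ^ 2 + L ^ 2 by positivity)]
      _ = p + t / p * z + z ^ 2 / (2 * p) := by
          rw [show (t + z) ^ 2 + L ^ 2 = p ^ 2 + 2 * t * z + z ^ 2 by rw [hpp]; ring]
          field_simp
          ring
      _ ≤ p + t / p * z + z ^ 2 / (2 * L) := by gcongr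
  have hhalf : z ^ 2 / (4 * L) = z ^ 2 / (2 * L) / 2 := by
    field_simp
    ring
  unfold softPos
  rw [← hp, hhalf]
  linarith

/-- The mean of the increment from state `x`, truncated below at `-K`. -/
noncomputable def truncatedDrift (P : Kernel ℝ ℝ) (K x : ℝ) : ℝ := ∫ y, max y (-K) ∂(P x)

lemma measurable_truncatedDrift (P : Kernel ℝ ℝ) [IsSFiniteKernel P] (K : ℝ) :
    Measurable (truncatedDrift P K) :=
  (StronglyMeasurable.integral_kernel (κ := P)
    (show Measurable fun y : ℝ => max y (-K) by fun_prop).stronglyMeasurable).measurable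

namespace IsCenteredMinorized

variable {P : Kernel ℝ ℝ} {M h : ℝ} {c : ENNReal}

lemma ae_le (hP : IsCenteredMinorized P M h c) (x : ℝ) : ∀ᵐ y ∂(P x), y ≤ M :=
  (measure_eq_zero_iff_ae_notMem.1 (hP.apply_Ioi x)).mono fun _ hy => not_lt.1 hy

variable [IsMarkovKernel P]

lemma integrable_max (hP : IsCenteredMinorized P M h c) (K x : ℝ) :
    Integrable (fun y => max y (-K)) (P x) :=
  (hP.integrable x).sup (integrable_const _)

lemma truncatedDrift_mem_Icc (hP : IsCenteredMinorized P M h c) {K : ℝ} (hK : 0 ≤ K) (x : ℝ) :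
    truncatedDrift P K x ∈ Icc 0 M := by
  constructor
  · rw [← hP.mean_eq_zero x]
    exact integral_mono (hP.integrable x) (hP.integrable_max K x) fun y => le_max_left _ _
  · have := integral_mono_ae (hP.integrable_max K x) (integrable_const M) <|
      (hP.ae_le x).mono fun y hy => max_le hy (by linarith [hP.pos_bound])
    rwa [integral_const, probReal_univ, one_smul] at this

lemma integrable_softPos (hP : IsCenteredMinorized P M h c) {L : ℝ} (hL : 0 ≤ L) (x t : ℝ) :
    Integrable (fun y => softPos L (t + y)) (P x) := by
  refine Integrable.mono' (g := fun y => |t| + |y| + L)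
    (((integrable_const _).add (hP.integrable x).abs).add (integrable_const _))
    ((continuous_softPos L).comp (continuous_const_add t)).aestronglyMeasurable
    (ae_of_all _ fun y => ?_)
  rw [Real.norm_eq_abs, abs_of_nonneg (softPos_nonneg _ _)]
  linarith [softPos_le hL (t + y), abs_add_le t y]

lemma integral_softPos_add_le (hP : IsCenteredMinorized P M h c) {L K : ℝ} (hL : 0 < L)
    (hK : M ≤ K) (x t : ℝ) :
    ∫ y, softPos L (t + y) ∂(P x) ≤ softPos L t + truncatedDrift P K x + K ^ 2 / (4 * L) := by
  have hK0 : 0 < K := hP.pos_bound.trans_le hK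
  obtain ⟨a, ha1, hstep⟩ := exists_softPos_add_le hL t
  have hdom : ∀ᵐ y ∂(P x),
      softPos L (t + y) ≤ softPos L t + a * max y (-K) + K ^ 2 / (4 * L) := by
    filter_upwards [hP.ae_le x] with y hy
    have hsq : (max y (-K)) ^ 2 / (4 * L) ≤ K ^ 2 / (4 * L) :=
      div_le_div_of_nonneg_right
        (sq_le_sq' (le_max_right y (-K)) (max_le (by linarith) (by linarith))) (by positivity)
    have hmono : softPos L (t + y) ≤ softPos L (t + max y (-K)) :=
      softPos_monotone L (by linarith [le_max_left y (-K)])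
    linarith [hstep (max y (-K))]
  have hmax := (hP.integrable_max K x).const_mul a
  have hlin : Integrable (fun y => softPos L t + a * max y (-K)) (P x) :=
    (integrable_const _).add hmax
  have hint := integral_mono_ae (hP.integrable_softPos hL.le x t)
    (hlin.add (integrable_const _)) hdom
  rw [integral_add' hlin (integrable_const _),
    integral_add (integrable_const _) hmax, integral_const_mul] at hint
  simp only [integral_const, probReal_univ, one_smul] at hint
  have hdrift : a * truncatedDrift P K x ≤ truncatedDrift P K x :=
    mul_le_of_le_one_left (hP.truncatedDrift_mem_Icc hK0.le x).1 ha1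
  exact hint.trans (by gcongr; exact hdrift)

end IsCenteredMinorized

lemma ofReal_add_sum_add_geometric_le {a b C r : ℝ} (ha : 0 ≤ a) (hb : 0 ≤ b) (hC : 0 ≤ C)
    (hr0 : 0 ≤ r) (hr1 : r < 1) (n : ℕ) :
    ENNReal.ofReal a + ∑ i ∈ Finset.range n, ENNReal.ofReal (b + C * r ^ i) ≤
      ENNReal.ofReal (a + C * (1 - r)⁻¹ + n * b) := by
  have hgeom : ∑ i ∈ Finset.range n, r ^ i ≤ (1 - r)⁻¹ := by
    rw [← tsum_geometric_of_lt_one hr0 hr1]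
    exact (summable_geometric_of_lt_one hr0 hr1).sum_le_tsum _ fun i _ => pow_nonneg hr0 i
  rw [← ENNReal.ofReal_sum_of_nonneg fun i _ => by positivity,
    ← ENNReal.ofReal_add ha (Finset.sum_nonneg fun i _ => by positivity)]
  refine ENNReal.ofReal_le_ofReal ?_
  rw [Finset.sum_add_distrib, ← Finset.mul_sum, Finset.sum_const, Finset.card_range, nsmul_eq_mul]
  linarith [mul_le_mul_of_nonneg_left hgeom hC]

lemma lintegral_pow_le_add_sum {E : Type*} [MeasurableSpace E] (T : Kernel E E)
    {V b : E → ENNReal} (hV : Measurable V) (hb : Measurable b)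
    (hdrift : ∀ z, ∫⁻ y, V y ∂(T z) ≤ V z + b z) (n : ℕ) (z : E) :
    ∫⁻ y, V y ∂((T ^ n) z) ≤ V z + ∑ i ∈ Finset.range n, ∫⁻ y, b y ∂((T ^ i) z) := by
  induction n with
  | zero => simp only [pow_zero_apply, lintegral_dirac' z hV, Finset.range_zero, Finset.sum_empty,
      add_zero, le_refl]
  | succ n ih =>
    calc ∫⁻ y, V y ∂((T ^ (n + 1)) z) ≤ ∫⁻ y, V y + b y ∂((T ^ n) z) := by
          rw [lintegral_pow_succ' T n z hV]
          exact lintegral_mono hdrift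
      _ = ∫⁻ y, V y ∂((T ^ n) z) + ∫⁻ y, b y ∂((T ^ n) z) := lintegral_add_right _ hb
      _ ≤ _ := by
          rw [Finset.sum_range_succ, ← add_assoc]
          gcongr

namespace IsCenteredMinorized

variable {P : Kernel ℝ ℝ} {M h : ℝ} {c : ENNReal} [IsMarkovKernel P]

lemma lintegral_softPos_walkKernel_le (hP : IsCenteredMinorized P M h c) {L K σ : ℝ} (hL : 0 < L)
    (hK : M ≤ K) (hσ : σ = 1 ∨ σ = -1) (z : ℝ × ℝ) :
    ∫⁻ y, ENNReal.ofReal (softPos L y.2) ∂(walkKernel P σ z) ≤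
      ENNReal.ofReal (softPos L z.2) +
        ENNReal.ofReal (truncatedDrift P K z.1 + K ^ 2 / (4 * L)) := by
  obtain ⟨x, t⟩ := z
  have hK0 : 0 ≤ K := hP.pos_bound.le.trans hK
  have hreal : Integrable (fun y => softPos L (t + σ * y)) (P x) ∧
      ∫ y, softPos L (t + σ * y) ∂(P x) ≤
        softPos L t + truncatedDrift P K x + K ^ 2 / (4 * L) := by
    rcases hσ with rfl | rfl
    · simp only [one_mul]
      exact ⟨hP.integrable_softPos hL.le x t, hP.integral_softPos_add_le hL hK x t⟩
    · have hreflect :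
          (fun y => softPos L (t + -1 * y)) = fun y => softPos L (-t + y) + (t - y) := by
        funext y
        rw [show t + -1 * y = -(-t + y) by ring, softPos_neg]
        ring
      have hpsi := hP.integrable_softPos hL.le x (-t)
      have hlin : Integrable (fun y => t - y) (P x) := (integrable_const t).sub (hP.integrable x)
      rw [hreflect, integral_add hpsi hlin, integral_sub (integrable_const t) (hP.integrable x),
        hP.mean_eq_zero, integral_const, probReal_univ, one_smul]
      refine ⟨hpsi.add hlin, ?_⟩
      linarith [hP.integral_softPos_add_le hL hK x (-t), softPos_neg L t]
  have hmeas : Measurable fun y : ℝ × ℝ => ENNReal.ofReal (softPos L y.2) :=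
    ((continuous_softPos L).measurable.comp measurable_snd).ennreal_ofReal
  rw [lintegral_walkKernel P σ hmeas,
    ← ofReal_integral_eq_lintegral_ofReal hreal.1 (ae_of_all _ fun y => softPos_nonneg _ _),
    ← ENNReal.ofReal_add (softPos_nonneg _ _)
      (add_nonneg (hP.truncatedDrift_mem_Icc hK0 x).1 (by positivity)), ← add_assoc]
  exact ENNReal.ofReal_le_ofReal hreal.2

lemma tendsto_truncatedDrift (hP : IsCenteredMinorized P M h c) (x : ℝ) :
    Tendsto (fun K : ℕ => truncatedDrift P K x) atTop (nhds 0) := by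
  rw [← hP.mean_eq_zero x]
  refine tendsto_integral_of_dominated_convergence (fun y => |y|)
    (fun K => (hP.integrable_max _ _).aestronglyMeasurable) (hP.integrable x).abs
    (fun K => ae_of_all _ fun y => ?_) (ae_of_all _ fun y => ?_)
  · rw [Real.norm_eq_abs, abs_le]
    exact ⟨(neg_abs_le y).trans (le_max_left _ _), max_le (le_abs_self y)
      ((neg_nonpos.2 K.cast_nonneg).trans (abs_nonneg y))⟩
  · refine tendsto_const_nhds.congr' ?_
    filter_upwards [tendsto_natCast_atTop_atTop.eventually_ge_atTop (-y)] with K hK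
    exact (max_eq_left (neg_le.1 hK)).symm

lemma tendsto_integral_truncatedDrift (hP : IsCenteredMinorized P M h c) (π : Measure ℝ)
    [IsFiniteMeasure π] :
    Tendsto (fun K : ℕ => ∫ x, truncatedDrift P K x ∂π) atTop (nhds 0) := by
  rw [← integral_zero ℝ ℝ (μ := π)]
  refine tendsto_integral_of_dominated_convergence (fun _ => M)
    (fun K => (measurable_truncatedDrift P K).aestronglyMeasurable) (integrable_const _)
    (fun K => ae_of_all _ fun x => ?_) (ae_of_all _ hP.tendsto_truncatedDrift)
  have hmem := hP.truncatedDrift_mem_Icc K.cast_nonneg x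
  rw [Real.norm_eq_abs, abs_of_nonneg hmem.1]
  exact hmem.2

lemma lintegral_truncatedDrift_add_le (hP : IsCenteredMinorized P M h c) {π : Measure ℝ} {r : ℝ}
    (hπ : UniformlyErgodic P π r) {K a : ℝ} (hK : 0 ≤ K) (ha : 0 ≤ a) (n : ℕ) (x : ℝ) :
    ∫⁻ y, ENNReal.ofReal (truncatedDrift P K y + a) ∂((P ^ n) x) ≤
      ENNReal.ofReal (∫ y, truncatedDrift P K y ∂π + a + M * r ^ n) := by
  have hmem := hP.truncatedDrift_mem_Icc hK
  have hint : Integrable (truncatedDrift P K) ((P ^ n) x) :=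
    .of_mem_Icc 0 M (measurable_truncatedDrift P K).aemeasurable (ae_of_all _ hmem)
  have hadd : Integrable (fun y => truncatedDrift P K y + a) ((P ^ n) x) :=
    hint.add (integrable_const a)
  rw [← ofReal_integral_eq_lintegral_ofReal hadd
    (ae_of_all _ fun y => add_nonneg (hmem y).1 ha),
    integral_add hint (integrable_const a), integral_const, probReal_univ, one_smul]
  have := (abs_le.1 (hπ n x _ 0 M (measurable_truncatedDrift P K) hmem)).2
  exact ENNReal.ofReal_le_ofReal (by linarith)

lemma const_ne_top (hP : IsCenteredMinorized P M h c) : c ≠ ⊤ := by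
  rintro rfl
  have hle := hP.smul_volume_le 0 univ
  have hpos : ENNReal.ofReal (h - -h) ≠ 0 := by
    simpa using by linarith [hP.pos_width]
  rw [Measure.smul_apply, Measure.restrict_apply_univ, Real.volume_Icc, smul_eq_mul,
    ENNReal.top_mul hpos] at hle
  exact absurd (hle.trans prob_le_one) (by simp)

lemma exists_uniformlyErgodic (hP : IsCenteredMinorized P M h c) :
    ∃ π r, IsProbabilityMeasure π ∧ 0 ≤ r ∧ r < 1 ∧ UniformlyErgodic P π r := by
  have := Measure.smul_finite (volume.restrict (Icc (-h) h)) hP.const_ne_top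
  refine _root_.exists_uniformlyErgodic hP.smul_volume_le fun h0 => ?_
  have huniv := congrArg (fun m => m univ) h0
  simp [hP.const_ne_zero] at huniv
  linarith [hP.pos_width]

/-- The walk is a martingale with increments bounded above, and truncating the increments at `-K`
costs, on average in the stationary regime, a drift that vanishes as `K → ∞`. -/
lemma exists_lintegral_snd_le (hP : IsCenteredMinorized P M h c) {σ : ℝ} (hσ : σ = 1 ∨ σ = -1)
    {ε : ℝ} (hε : 0 < ε) (z : ℝ × ℝ) :
    ∃ C, 0 ≤ C ∧ ∀ n : ℕ,
      ∫⁻ y, ENNReal.ofReal y.2 ∂((walkKernel P σ ^ n) z) ≤ ENNReal.ofReal (C + n * ε) := by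
  obtain ⟨π, r, hπ, hr0, hr1, herg⟩ := hP.exists_uniformlyErgodic
  obtain ⟨K, hdrift, hMK⟩ := (((tendsto_order.1 (hP.tendsto_integral_truncatedDrift π)).2 (ε / 2)
    (half_pos hε)).and (tendsto_natCast_atTop_atTop.eventually_ge_atTop M)).exists
  have hK : (0 : ℝ) < K := hP.pos_bound.trans_le hMK
  obtain ⟨L, hL, hcurv⟩ : ∃ L : ℝ, 0 < L ∧ (K : ℝ) ^ 2 / (4 * L) = ε / 2 :=
    ⟨K ^ 2 / (2 * ε), by positivity, by field_simp; ring⟩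
  have hM := hP.pos_bound.le
  refine ⟨softPos L z.2 + M * (1 - r)⁻¹, add_nonneg (softPos_nonneg _ _)
    (mul_nonneg hM (inv_nonneg.2 (sub_nonneg.2 hr1.le))), fun n => ?_⟩
  have hstep (i : ℕ) : ∫⁻ y, ENNReal.ofReal (truncatedDrift P K y.1 + ε / 2)
      ∂((walkKernel P σ ^ i) z) ≤ ENNReal.ofReal (ε + M * r ^ i) := by
    rw [lintegral_walkKernel_pow_fst P σ
      ((measurable_truncatedDrift P K).add_const _).ennreal_ofReal]
    exact (hP.lintegral_truncatedDrift_add_le herg hK.le (half_pos hε).le i z.1).trans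
      (ENNReal.ofReal_le_ofReal (by linarith))
  calc ∫⁻ y, ENNReal.ofReal y.2 ∂((walkKernel P σ ^ n) z)
      ≤ ∫⁻ y, ENNReal.ofReal (softPos L y.2) ∂((walkKernel P σ ^ n) z) :=
        lintegral_mono fun y => ENNReal.ofReal_le_ofReal (le_softPos L y.2)
    _ ≤ ENNReal.ofReal (softPos L z.2) + ∑ i ∈ Finset.range n,
          ∫⁻ y, ENNReal.ofReal (truncatedDrift P K y.1 + ε / 2) ∂((walkKernel P σ ^ i) z) :=
        lintegral_pow_le_add_sum _
          ((continuous_softPos L).measurable.comp measurable_snd).ennreal_ofReal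
          (((measurable_truncatedDrift P K).comp measurable_fst).add_const _).ennreal_ofReal
          (fun y => hcurv ▸ hP.lintegral_softPos_walkKernel_le hL hMK hσ y) n z
    _ ≤ ENNReal.ofReal (softPos L z.2) +
          ∑ i ∈ Finset.range n, ENNReal.ofReal (ε + M * r ^ i) := by
        gcongr with i
        exact hstep i
    _ ≤ ENNReal.ofReal (softPos L z.2 + M * (1 - r)⁻¹ + n * ε) :=
        ofReal_add_sum_add_geometric_le (softPos_nonneg _ _) hε.le hM hr0 hr1 n

end IsCenteredMinorized

lemma lintegral_add_le_one_add_lintegral {E : Type*} [MeasurableSpace E] {ν μ : Measure E}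
    [IsFiniteMeasure ν] [IsProbabilityMeasure μ] (h : ν ≤ μ) {f : E → ENNReal} (hf : ∀ y, f y ≤ 1) :
    ∫⁻ y, f y ∂μ + ν univ ≤ 1 + ∫⁻ y, f y ∂ν := by
  have hμ : μ - ν + ν = μ := Measure.sub_add_cancel_of_le h
  have hmass : (μ - ν) univ + ν univ = 1 := by rw [← Measure.add_apply, hμ, measure_univ]
  calc ∫⁻ y, f y ∂μ + ν univ = ∫⁻ y, f y ∂(μ - ν) + ∫⁻ y, f y ∂ν + ν univ := by
        rw [← lintegral_add_measure, hμ]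
    _ ≤ (μ - ν) univ + ∫⁻ y, f y ∂ν + ν univ := by
        gcongr
        exact (lintegral_mono hf).trans_eq lintegral_one
    _ = 1 + ∫⁻ y, f y ∂ν := by rw [← hmass]; ring

section Recurrence

/-- The states of the walk whose position is nonnegative. -/
def upperHalf : Set (ℝ × ℝ) := {z | 0 ≤ z.2}

lemma mem_upperHalf {z : ℝ × ℝ} : z ∈ upperHalf ↔ 0 ≤ z.2 := Iff.rfl

lemma measurableSet_upperHalf : MeasurableSet upperHalf :=
  measurableSet_le measurable_const measurable_snd

/-- The states of the walk whose position is nonpositive. -/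
def lowerHalf : Set (ℝ × ℝ) := {z | z.2 ≤ 0}

lemma mem_lowerHalf {z : ℝ × ℝ} : z ∈ lowerHalf ↔ z.2 ≤ 0 := Iff.rfl

lemma measurableSet_lowerHalf : MeasurableSet lowerHalf :=
  measurableSet_le measurable_snd measurable_const

/-- The walk killed when its position becomes negative; the initial position is not tested. -/
noncomputable def killedWalk (P : Kernel ℝ ℝ) (σ : ℝ) : Kernel (ℝ × ℝ) (ℝ × ℝ) :=
  (walkKernel P σ).restrict measurableSet_upperHalf

/-- The integral over the next increment `y ∈ [-h, h]` of the probability that the walk, now at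
position `s`, makes the increment `y` and then stays nonnegative forever. -/
noncomputable def uniformSurvival (P : Kernel ℝ ℝ) (h σ s : ℝ) : ENNReal :=
  ∫⁻ y in Icc (-h) h, upperHalf.indicator (survival (killedWalk P σ)) (y, s + σ * y)

/-- The potential of the recurrence argument: the probability of staying nonnegative for `n` steps,
integrated over all starting positions between `0` and the actual one. -/
noncomputable def survivalArea (P : Kernel ℝ ℝ) (σ : ℝ) (n : ℕ) (z : ℝ × ℝ) : ENNReal :=
  ∫⁻ t in Iic z.2, upperHalf.indicator (fun y => (killedWalk P σ ^ n) y univ) (z.1, t)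

variable (P : Kernel ℝ ℝ) (σ : ℝ)

lemma measurable_indicator_killedWalk_pow (n : ℕ) :
    Measurable (upperHalf.indicator fun y => (killedWalk P σ ^ n) y univ) :=
  ((killedWalk P σ ^ n).measurable_coe .univ).indicator measurableSet_upperHalf

lemma survivalArea_eq_setLIntegral_Icc (n : ℕ) (z : ℝ × ℝ) :
    survivalArea P σ n z = ∫⁻ t in Icc 0 z.2, (killedWalk P σ ^ n) (z.1, t) univ := by
  rw [← Ici_inter_Iic, ← setLIntegral_indicator measurableSet_Ici]
  rfl

lemma measurable_survivalArea (n : ℕ) : Measurable (survivalArea P σ n) := by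
  have hset : MeasurableSet {p : (ℝ × ℝ) × ℝ | p.2 ≤ p.1.2} :=
    measurableSet_le measurable_snd (by fun_prop)
  have hind := ((measurable_indicator_killedWalk_pow P σ n).comp
    (by fun_prop : Measurable fun p : (ℝ × ℝ) × ℝ => (p.1.1, p.2))).indicator hset
  convert hind.lintegral_prod_right' (ν := volume) using 2 with z
  exact (lintegral_indicator measurableSet_Iic _).symm

lemma survivalArea_zero (z : ℝ × ℝ) : survivalArea P σ 0 z = ENNReal.ofReal z.2 := by
  simp only [survivalArea_eq_setLIntegral_Icc, pow_zero_apply, measure_univ, setLIntegral_one,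
    Real.volume_Icc, sub_zero]

variable [IsMarkovKernel P]

lemma lintegral_killedWalk {f : ℝ × ℝ → ENNReal} (hf : Measurable f) (z : ℝ × ℝ) :
    ∫⁻ y, f y ∂(killedWalk P σ z) = ∫⁻ y, upperHalf.indicator f (y, z.2 + σ * y) ∂(P z.1) := by
  rw [killedWalk, Kernel.restrict_apply, ← lintegral_indicator measurableSet_upperHalf,
    lintegral_walkKernel P σ (hf.indicator measurableSet_upperHalf)]

lemma killedWalk_apply_univ_le_one (z : ℝ × ℝ) : killedWalk P σ z univ ≤ 1 :=
  restrict_apply_univ_le_one _ _ z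

lemma killedWalk_pow_succ_apply_univ (n : ℕ) (z : ℝ × ℝ) :
    (killedWalk P σ ^ (n + 1)) z univ =
      ∫⁻ y, upperHalf.indicator (fun y => (killedWalk P σ ^ n) y univ) (y, z.2 + σ * y)
        ∂(P z.1) := by
  rw [pow_succ_apply_univ, lintegral_killedWalk P σ ((killedWalk P σ ^ n).measurable_coe .univ)]

lemma survival_killedWalk_eq_lintegral (z : ℝ × ℝ) :
    survival (killedWalk P σ) z =
      ∫⁻ y, upperHalf.indicator (survival (killedWalk P σ)) (y, z.2 + σ * y) ∂(P z.1) := by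
  rw [survival_eq_lintegral (killedWalk_apply_univ_le_one P σ),
    lintegral_killedWalk P σ (measurable_survival _)]

lemma indicator_survival_killedWalk_le_one (z : ℝ × ℝ) :
    upperHalf.indicator (survival (killedWalk P σ)) z ≤ 1 :=
  (indicator_le_self _ _ z).trans (survival_le_one (killedWalk_apply_univ_le_one P σ) z)

lemma indicator_upperHalf_mono {f : ℝ × ℝ → ENNReal} (hf : ∀ x, Monotone fun t => f (x, t))
    (x : ℝ) : Monotone fun t => upperHalf.indicator f (x, t) := by
  intro s t hst
  by_cases hs : 0 ≤ s
  · simpa only [indicator, mem_upperHalf, hs, hs.trans hst, if_true] using hf x hst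
  · simp only [indicator, mem_upperHalf, hs, if_false, zero_le]

lemma monotone_killedWalk_pow_apply_univ (n : ℕ) (x : ℝ) :
    Monotone fun t => (killedWalk P σ ^ n) (x, t) univ := by
  induction n generalizing x with
  | zero => simp only [pow_zero_apply, measure_univ, monotone_const]
  | succ n ih =>
    intro s t hst
    simp only [killedWalk_pow_succ_apply_univ]
    exact lintegral_mono fun y => indicator_upperHalf_mono ih y (add_le_add_left hst _)

lemma monotone_uniformSurvival (h : ℝ) : Monotone (uniformSurvival P h σ) := by
  have hsurv (x : ℝ) : Monotone fun t => survival (killedWalk P σ) (x, t) := fun s t hst =>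
    iInf_mono fun n => monotone_killedWalk_pow_apply_univ P σ n x hst
  exact fun s t hst => lintegral_mono fun y =>
    indicator_upperHalf_mono hsurv y (add_le_add_left hst _)

lemma lintegral_survivalArea (n : ℕ) (z : ℝ × ℝ) :
    ∫⁻ y, survivalArea P σ n y ∂(walkKernel P σ z) =
      ∫⁻ t in Iic z.2, (killedWalk P σ ^ (n + 1)) (z.1, t) univ := by
  set F := upperHalf.indicator fun y => (killedWalk P σ ^ n) y univ with hF
  have hFm : Measurable fun p : ℝ × ℝ => F (p.1, p.2 + σ * p.1) :=
    (measurable_indicator_killedWalk_pow P σ n).comp (by fun_prop)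
  have hshift (y : ℝ) : ∫⁻ t in Iic (z.2 + σ * y), F (y, t) =
      ∫⁻ t in Iic z.2, F (y, t + σ * y) := by
    rw [← lintegral_indicator measurableSet_Iic, ← lintegral_indicator measurableSet_Iic,
      ← lintegral_add_right_eq_self _ (σ * y)]
    simp only [indicator, mem_Iic, add_le_add_iff_right]
  calc ∫⁻ y, survivalArea P σ n y ∂(walkKernel P σ z)
      = ∫⁻ y, (∫⁻ t in Iic (z.2 + σ * y), F (y, t)) ∂(P z.1) :=
        lintegral_walkKernel P σ (measurable_survivalArea P σ n) z
    _ = ∫⁻ y, (∫⁻ t in Iic z.2, F (y, t + σ * y)) ∂(P z.1) := lintegral_congr hshift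
    _ = ∫⁻ t in Iic z.2, ∫⁻ y, F (y, t + σ * y) ∂(P z.1) :=
        lintegral_lintegral_swap hFm.aemeasurable
    _ = ∫⁻ t in Iic z.2, (killedWalk P σ ^ (n + 1)) (z.1, t) univ := by
        simp only [killedWalk_pow_succ_apply_univ, hF]

/-- Reflecting the position exchanges the two half planes. -/
lemma restrict_pow_apply_univ_eq_killedWalk (n : ℕ) (z : ℝ × ℝ) :
    ((walkKernel P 1).restrict measurableSet_lowerHalf ^ n) z univ =
      (killedWalk P (-1) ^ n) (z.1, -z.2) univ := by
  induction n generalizing z with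
  | zero => simp only [pow_zero_apply, measure_univ]
  | succ n ih =>
    have hmeas := ((walkKernel P 1).restrict measurableSet_lowerHalf ^ n).measurable_coe .univ
    rw [pow_succ_apply_univ, killedWalk_pow_succ_apply_univ, Kernel.restrict_apply,
      ← lintegral_indicator measurableSet_lowerHalf,
      lintegral_walkKernel P 1 (hmeas.indicator measurableSet_lowerHalf)]
    refine lintegral_congr fun y => ?_
    rw [show -z.2 + -1 * y = -(z.2 + 1 * y) by ring]
    have hmem : (y, -(z.2 + 1 * y)) ∈ upperHalf ↔ (y, z.2 + 1 * y) ∈ lowerHalf := by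
      rw [mem_upperHalf, mem_lowerHalf, neg_nonneg]
    by_cases hy : (y, z.2 + 1 * y) ∈ lowerHalf
    · rw [indicator_of_mem hy, indicator_of_mem (hmem.2 hy), ih]
    · rw [indicator_of_notMem hy, indicator_of_notMem (hmem.not.2 hy)]

namespace IsCenteredMinorized

variable {P σ} {M h : ℝ} {c : ENNReal}

lemma smul_uniformSurvival_le (hP : IsCenteredMinorized P M h c) (z : ℝ × ℝ) :
    c * uniformSurvival P h σ z.2 ≤ survival (killedWalk P σ) z := by
  rw [survival_killedWalk_eq_lintegral, uniformSurvival, ← smul_eq_mul,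
    ← lintegral_smul_measure]
  exact lintegral_mono' (hP.smul_volume_le z.1) le_rfl

lemma exists_uniformSurvival_ne_zero (hP : IsCenteredMinorized P M h c) {z : ℝ × ℝ}
    (hz : survival (killedWalk P σ) z ≠ 0) : ∃ s, uniformSurvival P h σ s ≠ 0 := by
  by_contra! hzero
  set ν := c • volume.restrict (Icc (-h) h) with hν
  have := Measure.smul_finite (volume.restrict (Icc (-h) h)) hP.const_ne_top
  have hνuniv : ν univ ≠ 0 := by
    simp [hν, hP.const_ne_zero]
    linarith [hP.pos_width]
  have hle (y : ℝ × ℝ) : survival (killedWalk P σ) y + ν univ ≤ 1 :=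
    calc survival (killedWalk P σ) y + ν univ
        ≤ 1 + ∫⁻ x, upperHalf.indicator (survival (killedWalk P σ)) (x, y.2 + σ * x) ∂ν := by
          rw [survival_killedWalk_eq_lintegral]
          exact lintegral_add_le_one_add_lintegral (hP.smul_volume_le y.1)
            fun x => indicator_survival_killedWalk_le_one P σ _
      _ = 1 + c * uniformSurvival P h σ y.2 := by rw [hν, lintegral_smul_measure]; rfl
      _ = 1 := by rw [hzero, mul_zero, add_zero]
  have hsup := iSup_le hle
  rw [← ENNReal.iSup_add, iSup_survival_eq_one (killedWalk_apply_univ_le_one P σ) hz] at hsup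
  exact (ENNReal.lt_add_right ENNReal.one_ne_top hνuniv).not_ge hsup

lemma half_le_volume_setOf_half_le (hh : 0 < h) (hσ : σ = 1 ∨ σ = -1) :
    ENNReal.ofReal (h / 2) ≤ volume (Icc (-h) h ∩ {y | h / 2 ≤ σ * y}) := by
  rcases hσ with rfl | rfl
  · calc ENNReal.ofReal (h / 2) = volume (Icc (h / 2) h) := by
          rw [Real.volume_Icc]
          congr 1
          ring
      _ ≤ volume (Icc (-h) h ∩ {y | h / 2 ≤ 1 * y}) :=
          measure_mono fun y hy => ⟨⟨by linarith [hy.1], hy.2⟩, by simpa using hy.1⟩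
  · calc ENNReal.ofReal (h / 2) = volume (Icc (-h) (-(h / 2))) := by
          rw [Real.volume_Icc]
          congr 1
          ring
      _ ≤ volume (Icc (-h) h ∩ {y | h / 2 ≤ -1 * y}) :=
          measure_mono fun y hy => ⟨⟨hy.1, by linarith [hy.2]⟩, by simpa using le_neg.1 hy.2⟩

/-- From `s ≥ -h/2` an increment of size at least `h/2` lifts the walk to a nonnegative position
above `s + h/2`. -/
lemma uniformSurvival_add_half_eq_zero (hP : IsCenteredMinorized P M h c) (hσ : σ = 1 ∨ σ = -1)
    {s : ℝ} (hs : -(h / 2) ≤ s) (hzero : uniformSurvival P h σ s = 0) :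
    uniformSurvival P h σ (s + h / 2) = 0 := by
  set B := Icc (-h) h ∩ {y : ℝ | h / 2 ≤ σ * y}
  have hBmeas : MeasurableSet B :=
    measurableSet_Icc.inter (measurableSet_le measurable_const (by fun_prop))
  have hle : c * uniformSurvival P h σ (s + h / 2) * volume B ≤ uniformSurvival P h σ s := by
    rw [← setLIntegral_const]
    refine le_trans (setLIntegral_mono' hBmeas fun y hy => ?_)
      (lintegral_mono_set inter_subset_left)
    have hy' : h / 2 ≤ σ * y := hy.2
    rw [indicator_of_mem (mem_upperHalf.2 (by simp only; linarith))]
    refine le_trans ?_ (hP.smul_uniformSurvival_le _)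
    gcongr
    exact monotone_uniformSurvival P σ h (by simp only; linarith)
  rw [hzero, nonpos_iff_eq_zero, mul_eq_zero, mul_eq_zero] at hle
  have hBpos : volume B ≠ 0 :=
    ((ENNReal.ofReal_pos.2 (half_pos hP.pos_width)).trans_le
      (half_le_volume_setOf_half_le hP.pos_width hσ)).ne'
  simpa only [hP.const_ne_zero, hBpos, false_or, or_false] using hle

lemma uniformSurvival_neg_half_ne_zero (hP : IsCenteredMinorized P M h c)
    (hσ : σ = 1 ∨ σ = -1) {z : ℝ × ℝ} (hz : survival (killedWalk P σ) z ≠ 0) :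
    uniformSurvival P h σ (-(h / 2)) ≠ 0 := by
  have hh := half_pos hP.pos_width
  intro hzero
  have hsteps (n : ℕ) : uniformSurvival P h σ (-(h / 2) + n * (h / 2)) = 0 := by
    induction n with
    | zero => simpa using hzero
    | succ n ih =>
      have := hP.uniformSurvival_add_half_eq_zero hσ
        (le_add_of_nonneg_right (by positivity)) ih
      rwa [add_assoc, ← add_one_mul, ← Nat.cast_succ] at this
  obtain ⟨s, hs⟩ := hP.exists_uniformSurvival_ne_zero hz
  obtain ⟨n, hn⟩ := exists_nat_ge ((s + h / 2) / (h / 2))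
  rw [div_le_iff₀ hh] at hn
  exact hs (nonpos_iff_eq_zero.1 <|
    (monotone_uniformSurvival P σ h (by linarith)).trans_eq (hsteps n))

lemma survivalArea_succ_add_le (hP : IsCenteredMinorized P M h c) (n : ℕ) {z : ℝ × ℝ}
    (hz : z ∈ upperHalf) :
    survivalArea P σ (n + 1) z + c * uniformSurvival P h σ (-(h / 2)) * ENNReal.ofReal (h / 2) ≤
      ∫⁻ y, survivalArea P σ n y ∂(walkKernel P σ z) := by
  have hbelow : c * uniformSurvival P h σ (-(h / 2)) * ENNReal.ofReal (h / 2) ≤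
      ∫⁻ t in Ico (-(h / 2)) 0, (killedWalk P σ ^ (n + 1)) (z.1, t) univ := by
    rw [show ENNReal.ofReal (h / 2) = volume (Ico (-(h / 2)) 0) by simp, ← setLIntegral_const]
    refine setLIntegral_mono' measurableSet_Ico fun t ht => ?_
    calc c * uniformSurvival P h σ (-(h / 2)) ≤ c * uniformSurvival P h σ t := by
          gcongr
          exact monotone_uniformSurvival P σ h ht.1
      _ ≤ survival (killedWalk P σ) (z.1, t) := hP.smul_uniformSurvival_le (z.1, t)
      _ ≤ (killedWalk P σ ^ (n + 1)) (z.1, t) univ := iInf_le _ _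
  have hdisj : Disjoint (Icc 0 z.2) (Ico (-(h / 2)) 0) :=
    disjoint_left.2 fun t ht ht' => ht'.2.not_ge ht.1
  rw [lintegral_survivalArea, survivalArea_eq_setLIntegral_Icc]
  refine (add_le_add_right hbelow _).trans ?_
  rw [← lintegral_union measurableSet_Ico hdisj]
  refine lintegral_mono_set (union_subset Icc_subset_Iic_self fun t ht => ht.2.le.trans hz)

/-- Each step of the walk on the upper half plane gains a fixed amount of area from the starting
positions in `[-h/2, 0)`. -/
lemma survivalArea_add_le (hP : IsCenteredMinorized P M h c) (n : ℕ) (z : ℝ × ℝ) :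
    survivalArea P σ n z + n * (c * uniformSurvival P h σ (-(h / 2)) * ENNReal.ofReal (h / 2)) *
        upperHalf.indicator (survival (killedWalk P σ)) z ≤
      ∫⁻ y, ENNReal.ofReal y.2 ∂((walkKernel P σ ^ n) z) := by
  set η := c * uniformSurvival P h σ (-(h / 2)) * ENNReal.ofReal (h / 2)
  set w := upperHalf.indicator (survival (killedWalk P σ)) with hw
  have hwm : Measurable w := (measurable_survival _).indicator measurableSet_upperHalf
  have hpos : Measurable fun y : ℝ × ℝ => ENNReal.ofReal y.2 := measurable_snd.ennreal_ofReal
  induction n generalizing z with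
  | zero =>
    rw [Nat.cast_zero, zero_mul, zero_mul, add_zero, survivalArea_zero, pow_zero_apply,
      lintegral_dirac' z hpos]
  | succ n ih =>
    calc survivalArea P σ (n + 1) z + (n + 1 : ℕ) * η * w z
        ≤ ∫⁻ y, survivalArea P σ n y ∂(walkKernel P σ z) +
            n * η * ∫⁻ y, w y ∂(walkKernel P σ z) := by
          by_cases hz : z ∈ upperHalf
          · have hwz : w z = ∫⁻ y, w y ∂(walkKernel P σ z) := by
              rw [hw, indicator_of_mem hz, survival_killedWalk_eq_lintegral,
                lintegral_walkKernel P σ hwm]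
            have hgain : η * w z ≤ η :=
              mul_le_of_le_one_right' (indicator_survival_killedWalk_le_one P σ z)
            rw [← hwz, Nat.cast_succ, add_one_mul, add_mul, add_comm (n * η * w z), ← add_assoc]
            gcongr
            exact (add_le_add_right hgain _).trans (hP.survivalArea_succ_add_le n hz)
          · have hneg : z.2 < 0 := not_le.1 hz
            rw [survivalArea_eq_setLIntegral_Icc, Icc_eq_empty hneg.not_ge, Measure.restrict_empty,
              lintegral_zero_measure, hw, indicator_of_notMem hz, mul_zero, add_zero]
            exact zero_le
      _ = ∫⁻ y, survivalArea P σ n y + n * η * w y ∂(walkKernel P σ z) := by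
          rw [lintegral_add_right _ (hwm.const_mul _), lintegral_const_mul _ hwm]
      _ ≤ ∫⁻ y, ENNReal.ofReal y.2 ∂((walkKernel P σ ^ (n + 1)) z) := by
          rw [lintegral_pow_succ _ n z hpos]
          exact lintegral_mono ih

/-- Otherwise the area below the walk would grow linearly, whereas the walk grows sublinearly. -/
theorem survival_killedWalk_eq_zero (hP : IsCenteredMinorized P M h c) (hσ : σ = 1 ∨ σ = -1)
    (z : ℝ × ℝ) : survival (killedWalk P σ) z = 0 := by
  set w := upperHalf.indicator (survival (killedWalk P σ)) with hw
  suffices hzero : ∀ y, w y = 0 by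
    simp only [survival_killedWalk_eq_lintegral, ← hw, hzero, lintegral_zero]
  intro y
  by_contra hy
  have hsurv : survival (killedWalk P σ) y ≠ 0 := fun h0 =>
    hy (nonpos_iff_eq_zero.1 ((indicator_le_self _ _ y).trans_eq h0))
  set η := c * uniformSurvival P h σ (-(h / 2)) * ENNReal.ofReal (h / 2)
  have hη0 : η ≠ 0 := mul_ne_zero
    (mul_ne_zero hP.const_ne_zero (hP.uniformSurvival_neg_half_ne_zero hσ hsurv))
    (ENNReal.ofReal_pos.2 (half_pos hP.pos_width)).ne'
  obtain ⟨q, hq0, hq⟩ :=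
    ENNReal.lt_iff_exists_nnreal_btwn.1 (pos_iff_ne_zero.2 (mul_ne_zero hη0 hy))
  have hqpos : (0 : ℝ) < q := by exact_mod_cast hq0
  obtain ⟨C, hC0, hC⟩ := hP.exists_lintegral_snd_le hσ (half_pos hqpos) y
  obtain ⟨N, hN⟩ := exists_nat_gt (C / (q / 2))
  rw [div_lt_iff₀ (half_pos hqpos)] at hN
  have hlinear : ENNReal.ofReal (N * q) ≤ ENNReal.ofReal (C + N * (q / 2)) :=
    calc ENNReal.ofReal (N * q) = N * q := by
          rw [ENNReal.ofReal_mul N.cast_nonneg, ENNReal.ofReal_natCast, ENNReal.ofReal_coe_nnreal]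
      _ ≤ N * η * w y := by
          rw [mul_assoc]
          gcongr
      _ ≤ ENNReal.ofReal (C + N * (q / 2)) :=
          le_add_self.trans ((hP.survivalArea_add_le N y).trans (hC N))
  rw [ENNReal.ofReal_le_ofReal_iff (by positivity)] at hlinear
  linarith

lemma survival_restrict_lowerHalf_eq_zero (hP : IsCenteredMinorized P M h c) (z : ℝ × ℝ) :
    survival ((walkKernel P 1).restrict measurableSet_lowerHalf) z = 0 := by
  simp only [survival, restrict_pow_apply_univ_eq_killedWalk]
  exact hP.survival_killedWalk_eq_zero (Or.inr rfl) (z.1, -z.2)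

end IsCenteredMinorized

end Recurrence

section ReturnKernel

/-- The law of the walk at its first strictly negative position. -/
noncomputable def descentKernel (P : Kernel ℝ ℝ) : Kernel (ℝ × ℝ) (ℝ × ℝ) :=
  exitKernel (walkKernel P 1) measurableSet_upperHalf

/-- The law of the walk at its first strictly positive position. -/
noncomputable def ascentKernel (P : Kernel ℝ ℝ) : Kernel (ℝ × ℝ) (ℝ × ℝ) :=
  exitKernel (walkKernel P 1) measurableSet_lowerHalf

/-- The transition kernel from one overshoot of level `0` to the next. -/
noncomputable def returnKernel (P : Kernel ℝ ℝ) : Kernel (ℝ × ℝ) (ℝ × ℝ) :=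
  ascentKernel P ∘ₖ descentKernel P

/-- The common minorant of the return kernels: an undershoot `t` in `[-h/2, -h/4]` followed by a
single increment `x` in `(h/2, h]`, both drawn from Lebesgue measure. -/
noncomputable def returnMinorant (h : ℝ) : Measure (ℝ × ℝ) :=
  ((volume.restrict (Icc (-(h / 2)) (-(h / 4)))).prod (volume.restrict (Ioc (h / 2) h))).map
    fun p => (p.2, p.1 + p.2)

lemma lintegral_returnMinorant (h : ℝ) {f : ℝ × ℝ → ENNReal} (hf : Measurable f) :
    ∫⁻ y, f y ∂(returnMinorant h)
      = ∫⁻ t in Icc (-(h / 2)) (-(h / 4)), ∫⁻ x in Ioc (h / 2) h, f (x, t + x) := by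
  rw [returnMinorant, lintegral_map hf (by fun_prop)]
  exact lintegral_prod _ (by fun_prop)

lemma returnMinorant_ne_zero {h : ℝ} (hh : 0 < h) : returnMinorant h ≠ 0 := by
  have hI : ENNReal.ofReal (-(h / 4) - -(h / 2)) ≠ 0 := by simpa using by linarith
  have hJ : ENNReal.ofReal (h - h / 2) ≠ 0 := by simpa using hh
  rw [← Measure.measure_univ_ne_zero, ← lintegral_one,
    lintegral_returnMinorant h measurable_const]
  simpa only [setLIntegral_one, setLIntegral_const, Real.volume_Ioc, Real.volume_Icc]
    using mul_ne_zero hJ hI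

variable {P : Kernel ℝ ℝ} [IsMarkovKernel P]

lemma lintegral_returnKernel_eq_add {f : ℝ × ℝ → ENNReal} (hf : Measurable f) (z : ℝ × ℝ) :
    ∫⁻ y, f y ∂(returnKernel P z)
      = ∫⁻ y in upperHalfᶜ, ∫⁻ x, f x ∂(ascentKernel P y) ∂(walkKernel P 1 z)
        + ∫⁻ y in upperHalf, ∫⁻ x, f x ∂(returnKernel P y) ∂(walkKernel P 1 z) := by
  simp_rw [returnKernel, Kernel.lintegral_comp _ _ _ hf]
  exact lintegral_exitKernel_eq_add _ measurableSet_upperHalf hf.lintegral_kernel z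

namespace IsCenteredMinorized

variable {M h : ℝ} {c : ENNReal}

lemma isMarkovKernel_descentKernel (hP : IsCenteredMinorized P M h c) :
    IsMarkovKernel (descentKernel P) :=
  isMarkovKernel_exitKernel measurableSet_upperHalf (hP.survival_killedWalk_eq_zero (Or.inl rfl))

lemma isMarkovKernel_ascentKernel (hP : IsCenteredMinorized P M h c) :
    IsMarkovKernel (ascentKernel P) :=
  isMarkovKernel_exitKernel measurableSet_lowerHalf hP.survival_restrict_lowerHalf_eq_zero

lemma isMarkovKernel_returnKernel (hP : IsCenteredMinorized P M h c) :
    IsMarkovKernel (returnKernel P) := by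
  have := hP.isMarkovKernel_descentKernel
  have := hP.isMarkovKernel_ascentKernel
  unfold returnKernel
  infer_instance

lemma smul_setLIntegral_le (hP : IsCenteredMinorized P M h c) {f : ℝ × ℝ → ENNReal}
    (hf : Measurable f) {D : Set (ℝ × ℝ)} (hD : MeasurableSet D) {s : Set ℝ}
    (hs : MeasurableSet s) (hsh : s ⊆ Icc (-h) h) (z : ℝ × ℝ) (hsD : ∀ y ∈ s, (y, z.2 + y) ∈ D) :
    c * ∫⁻ y in s, f (y, z.2 + y) ≤ ∫⁻ y in D, f y ∂(walkKernel P 1 z) :=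
  calc c * ∫⁻ y in s, f (y, z.2 + y)
      = c * ∫⁻ y in s, D.indicator f (y, z.2 + y) := by
        rw [setLIntegral_congr_fun hs fun y hy => (indicator_of_mem (hsD y hy) f).symm]
    _ ≤ ∫⁻ y, D.indicator f (y, z.2 + y) ∂(c • volume.restrict (Icc (-h) h)) := by
        rw [lintegral_smul_measure, smul_eq_mul]
        gcongr
    _ ≤ ∫⁻ y, D.indicator f (y, z.2 + y) ∂(P z.1) := lintegral_mono' (hP.smul_volume_le z.1) le_rfl
    _ = ∫⁻ y in D, f y ∂(walkKernel P 1 z) := by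
        rw [← lintegral_indicator hD, lintegral_walkKernel P 1 (hf.indicator hD)]
        simp only [one_mul]

lemma smul_setLIntegral_le_ascentKernel (hP : IsCenteredMinorized P M h c) {f : ℝ × ℝ → ENNReal}
    (hf : Measurable f) {z : ℝ × ℝ} (hz : z.2 ∈ Icc (-(h / 2)) (-(h / 4))) :
    c * ∫⁻ x in Ioc (h / 2) h, f (x, z.2 + x) ≤ ∫⁻ y, f y ∂(ascentKernel P z) := by
  rw [ascentKernel, lintegral_exitKernel_eq_add _ measurableSet_lowerHalf hf]
  refine (hP.smul_setLIntegral_le hf measurableSet_lowerHalf.compl measurableSet_Ioc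
    (fun x hx => ⟨by linarith [hx.1, hP.pos_width], hx.2⟩) z fun x hx => ?_).trans le_self_add
  simp only [mem_compl_iff, mem_lowerHalf, not_le]
  linarith [hx.1, hz.1]

lemma smul_lintegral_returnMinorant_le_of_le_quarter (hP : IsCenteredMinorized P M h c)
    {f : ℝ × ℝ → ENNReal} (hf : Measurable f) {z : ℝ × ℝ} (hz : z.2 ∈ Icc 0 (h / 4)) :
    c * c * ∫⁻ y, f y ∂(returnMinorant h) ≤ ∫⁻ y, f y ∂(returnKernel P z) := by
  set I := Icc (-(h / 2)) (-(h / 4))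
  set s := (z.2 + ·) ⁻¹' I
  have hsm : MeasurableSet s := measurableSet_Icc.preimage (measurable_const_add z.2)
  have hmem (y) (hy : y ∈ s) : -(h / 2) ≤ z.2 + y ∧ z.2 + y ≤ -(h / 4) := hy
  set g : ℝ → ENNReal := fun t => ∫⁻ x in Ioc (h / 2) h, f (x, t + x)
  have hg : Measurable g := Measurable.lintegral_prod_right' (ν := volume.restrict (Ioc (h / 2) h))
    (f := fun p : ℝ × ℝ => f (p.2, p.1 + p.2)) (by fun_prop)
  calc c * c * ∫⁻ y, f y ∂(returnMinorant h) = c * (c * ∫⁻ t in I, g t) := by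
        rw [lintegral_returnMinorant h hf, mul_assoc]
    _ = c * ∫⁻ y in s, c * g (z.2 + y) := by
        rw [← (measurePreserving_add_left volume z.2).setLIntegral_comp_preimage_emb
          (measurableEmbedding_addLeft z.2) g I, lintegral_const_mul c (by fun_prop)]
    _ ≤ c * ∫⁻ y in s, ∫⁻ x, f x ∂(ascentKernel P (y, z.2 + y)) := by
        gcongr 1
        exact setLIntegral_mono' hsm fun y hy => hP.smul_setLIntegral_le_ascentKernel hf hy
    _ ≤ ∫⁻ y in upperHalfᶜ, ∫⁻ x, f x ∂(ascentKernel P y) ∂(walkKernel P 1 z) := by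
        refine hP.smul_setLIntegral_le (f := fun y => ∫⁻ x, f x ∂(ascentKernel P y))
          hf.lintegral_kernel measurableSet_upperHalf.compl hsm (fun y hy => ?_) z fun y hy => ?_
        · constructor <;> linarith [hmem y hy, hz.1, hz.2, hP.pos_width]
        · simp only [mem_compl_iff, mem_upperHalf, not_le]
          linarith [hmem y hy, hP.pos_width]
    _ ≤ ∫⁻ y, f y ∂(returnKernel P z) := by
        rw [lintegral_returnKernel_eq_add hf]
        exact le_self_add

/-- From a position above `h/4` the walk may first move down by at least `h/8`, while staying
positive. -/
lemma smul_lintegral_returnMinorant_le_of_quarter_lt (hP : IsCenteredMinorized P M h c)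
    {ε : ENNReal} {b : ℝ} {f : ℝ × ℝ → ENNReal} (hf : Measurable f)
    (hε : ∀ z : ℝ × ℝ, z.2 ∈ Icc 0 b →
      ε * ∫⁻ y, f y ∂(returnMinorant h) ≤ ∫⁻ y, f y ∂(returnKernel P z))
    {z : ℝ × ℝ} (hz : z.2 ∈ Ioc (h / 4) (b + h / 8)) :
    c * (ENNReal.ofReal (h / 8) * ε) * ∫⁻ y, f y ∂(returnMinorant h) ≤
      ∫⁻ y, f y ∂(returnKernel P z) := by
  set s := Icc (-(h / 4)) (-(h / 8))
  have hvol : volume s = ENNReal.ofReal (h / 8) := by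
    rw [Real.volume_Icc]
    congr 1
    ring
  calc c * (ENNReal.ofReal (h / 8) * ε) * ∫⁻ y, f y ∂(returnMinorant h)
      = c * ∫⁻ _ in s, ε * ∫⁻ y, f y ∂(returnMinorant h) := by
        rw [setLIntegral_const, hvol]
        ring
    _ ≤ c * ∫⁻ y in s, ∫⁻ x, f x ∂(returnKernel P (y, z.2 + y)) := by
        gcongr 1
        refine setLIntegral_mono' measurableSet_Icc fun y hy => hε _ ⟨?_, ?_⟩
        · linarith [hy.1, hz.1]
        · linarith [hy.2, hz.2]
    _ ≤ ∫⁻ y in upperHalf, ∫⁻ x, f x ∂(returnKernel P y) ∂(walkKernel P 1 z) := by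
        refine hP.smul_setLIntegral_le (f := fun y => ∫⁻ x, f x ∂(returnKernel P y))
          hf.lintegral_kernel measurableSet_upperHalf measurableSet_Icc
          (fun y hy => ?_) z fun y hy => ?_
        · constructor <;> linarith [hy.1, hy.2, hP.pos_width]
        · rw [mem_upperHalf]
          linarith [hy.1, hz.1]
    _ ≤ ∫⁻ y, f y ∂(returnKernel P z) := by
        rw [lintegral_returnKernel_eq_add hf]
        exact le_add_self

lemma exists_smul_lintegral_returnMinorant_le (hP : IsCenteredMinorized P M h c) (k : ℕ) :
    ∃ ε ≠ 0, ∀ z : ℝ × ℝ, z.2 ∈ Icc 0 (h / 4 + k * (h / 8)) → ∀ f, Measurable f →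
      ε * ∫⁻ y, f y ∂(returnMinorant h) ≤ ∫⁻ y, f y ∂(returnKernel P z) := by
  induction k with
  | zero =>
    refine ⟨c * c, mul_ne_zero hP.const_ne_zero hP.const_ne_zero, fun z hz f hf => ?_⟩
    exact hP.smul_lintegral_returnMinorant_le_of_le_quarter hf (by simpa using hz)
  | succ k ih =>
    obtain ⟨ε, hε, ih⟩ := ih
    have hstep0 : c * (ENNReal.ofReal (h / 8) * ε) ≠ 0 := mul_ne_zero hP.const_ne_zero <|
      mul_ne_zero (ENNReal.ofReal_pos.2 (div_pos hP.pos_width (by norm_num))).ne' hε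
    refine ⟨min (c * c) (c * (ENNReal.ofReal (h / 8) * ε)), ?_, fun z hz f hf => ?_⟩
    · exact (lt_min (pos_iff_ne_zero.2 (mul_ne_zero hP.const_ne_zero hP.const_ne_zero))
        (pos_iff_ne_zero.2 hstep0)).ne'
    rcases le_or_gt z.2 (h / 4) with hlow | hhigh
    · exact le_trans (mul_le_mul_left (min_le_left _ _) _)
        (hP.smul_lintegral_returnMinorant_le_of_le_quarter hf ⟨hz.1, hlow⟩)
    · refine le_trans (mul_le_mul_left (min_le_right _ _) _)
        (hP.smul_lintegral_returnMinorant_le_of_quarter_lt hf (fun y hy => ih y hy f hf)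
          ⟨hhigh, hz.2.trans_eq ?_⟩)
      push_cast
      ring

end IsCenteredMinorized

/-- The return kernel with the starting position first clamped to `[0, M]`, where the overshoots
live; this makes Doeblin's condition hold from every state. -/
noncomputable def clampedReturnKernel (P : Kernel ℝ ℝ) (M : ℝ) : Kernel (ℝ × ℝ) (ℝ × ℝ) :=
  (returnKernel P).comap (fun z => (z.1, max 0 (min z.2 M))) (by fun_prop)

lemma clampedReturnKernel_apply (P : Kernel ℝ ℝ) {M : ℝ} {z : ℝ × ℝ} (hz : z.2 ∈ Icc 0 M) :
    clampedReturnKernel P M z = returnKernel P z := by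
  rw [clampedReturnKernel, Kernel.comap_apply, min_eq_left hz.2, max_eq_right hz.1]

namespace IsCenteredMinorized

variable {M h : ℝ} {c : ENNReal}

lemma isMarkovKernel_clampedReturnKernel (hP : IsCenteredMinorized P M h c) :
    IsMarkovKernel (clampedReturnKernel P M) := by
  have := hP.isMarkovKernel_returnKernel
  unfold clampedReturnKernel
  infer_instance

lemma exists_uniformlyErgodic_clampedReturnKernel (hP : IsCenteredMinorized P M h c) :
    ∃ π r, IsProbabilityMeasure π ∧ 0 ≤ r ∧ r < 1 ∧
      UniformlyErgodic (clampedReturnKernel P M) π r := by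
  have := hP.isMarkovKernel_clampedReturnKernel
  have hh := hP.pos_width
  obtain ⟨k, hk⟩ := exists_nat_ge (M / (h / 8))
  rw [div_le_iff₀ (by positivity)] at hk
  obtain ⟨ε, hε, hle⟩ := hP.exists_smul_lintegral_returnMinorant_le k
  have hmin (z : ℝ × ℝ) : ε • returnMinorant h ≤ clampedReturnKernel P M z := by
    refine Measure.le_iff.2 fun A hA => ?_
    rw [Measure.smul_apply, smul_eq_mul, ← lintegral_indicator_one hA, ← lintegral_indicator_one hA]
    refine hle _ ⟨le_max_left _ _, max_le (by positivity) ?_⟩ _ (measurable_one.indicator hA)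
    linarith [min_le_right z.2 M]
  have hne : ε • returnMinorant h ≠ 0 := by
    simpa [← Measure.measure_univ_eq_zero, hε] using returnMinorant_ne_zero hh
  have : IsFiniteMeasure (ε • returnMinorant h) :=
    ⟨((hmin 0) univ).trans_lt (measure_lt_top _ _)⟩
  exact _root_.exists_uniformlyErgodic hmin hne

end IsCenteredMinorized

end ReturnKernel

section MarkovProcess

variable {Ω E : Type*}

/-- The first time after `l` at which `Z` is outside `B`, and `0` if there is none. -/
noncomputable def exitTime (Z : ℕ → Ω → E) (B : Set E) (l : ℕ) (ω : Ω) : ℕ :=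
  sInf {k | l < k ∧ Z k ω ∉ B}

/-- The event that `Z` is in `B` at the `a` times following `l`. -/
def stayEvent (Z : ℕ → Ω → E) (B : Set E) (l a : ℕ) : Set Ω :=
  {ω | ∀ k, l < k → k ≤ l + a → Z k ω ∈ B}

/-- The event that `l + a + 1` is the first time after `l` at which `Z` is outside `B`. -/
def exitEvent (Z : ℕ → Ω → E) (B : Set E) (l a : ℕ) : Set Ω :=
  stayEvent Z B l a ∩ Z (l + a + 1) ⁻¹' Bᶜ

variable {Z : ℕ → Ω → E} {B : Set E} {l a : ℕ} {ω : Ω}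

lemma stayEvent_zero : stayEvent Z B l 0 = univ :=
  eq_univ_of_forall fun _ _ hlk hkl => absurd hlk (not_lt.2 hkl)

lemma stayEvent_succ : stayEvent Z B l (a + 1) = stayEvent Z B l a ∩ Z (l + a + 1) ⁻¹' B := by
  ext ω
  refine ⟨fun hω => ⟨fun k h1 h2 => hω k h1 (by omega), hω _ (by omega) le_rfl⟩, ?_⟩
  rintro ⟨hstay, hlast⟩ k h1 h2
  rcases h2.lt_or_eq with h2 | rfl
  · exact hstay k h1 (by omega)
  · exact hlast

lemma exitTime_eq_of_mem_exitEvent (hω : ω ∈ exitEvent Z B l a) :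
    exitTime Z B l ω = l + a + 1 := by
  refine le_antisymm (Nat.sInf_le ⟨by omega, hω.2⟩) (le_csInf ⟨_, by omega, hω.2⟩ ?_)
  rintro k ⟨hlk, hkB⟩
  by_contra! hk
  exact hkB (hω.1 k hlk (by omega))

lemma exists_mem_exitEvent (hω : ∃ k, l < k ∧ Z k ω ∉ B) : ∃ a, ω ∈ exitEvent Z B l a := by
  obtain ⟨hlt, hnot⟩ := Nat.sInf_mem hω
  obtain ⟨a, ha⟩ := Nat.exists_eq_add_of_lt hlt
  rw [ha] at hnot
  refine ⟨a, fun j hlj hj => by_contra fun hjB => ?_, hnot⟩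
  exact Nat.notMem_of_lt_sInf ((Nat.lt_succ_of_le hj).trans_eq ha.symm) ⟨hlj, hjB⟩

lemma one_le_exitTime (hω : ∃ k, l < k ∧ Z k ω ∉ B) : 1 ≤ exitTime Z B l ω :=
  l.succ_pos.trans_le (Nat.sInf_mem hω).1

variable [MeasurableSpace E] {m0 : MeasurableSpace Ω}

/-- The process `Z`, adapted to `ℱ`, is from time `1` on Markov with transition kernel `T`. (The
initial increment of the theorem is unbounded, so time `0` has to be left out.) -/
structure IsMarkovProcess (μ : Measure Ω) (ℱ : Filtration ℕ m0) (Z : ℕ → Ω → E)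
    (T : Kernel E E) : Prop where
  adapted : Adapted ℱ Z
  setLIntegral_succ : ∀ l, 1 ≤ l → ∀ A, MeasurableSet[ℱ l] A → ∀ f : E → ENNReal, Measurable f →
    ∫⁻ ω in A, f (Z (l + 1) ω) ∂μ = ∫⁻ ω in A, ∫⁻ x, f x ∂(T (Z l ω)) ∂μ

lemma measurableSet_stayEvent {ℱ : Filtration ℕ m0} (hZ : Adapted ℱ Z) (hB : MeasurableSet B) :
    MeasurableSet[ℱ (l + a)] (stayEvent Z B l a) := by
  induction a with
  | zero => exact stayEvent_zero ▸ MeasurableSet.univ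
  | succ a ih =>
    rw [stayEvent_succ]
    exact (ℱ.mono (by omega) _ ih).inter (hZ _ hB)

lemma measurableSet_exitEvent {ℱ : Filtration ℕ m0} (hZ : Adapted ℱ Z) (hB : MeasurableSet B) :
    MeasurableSet[ℱ (l + a + 1)] (exitEvent Z B l a) :=
  (ℱ.mono (by omega) _ (measurableSet_stayEvent hZ hB)).inter (hZ _ hB.compl)

lemma setLIntegral_eq_tsum_exitEvent {μ : Measure Ω} {ℱ : Filtration ℕ m0} (hZ : Adapted ℱ Z)
    (hB : MeasurableSet B) (hexit : ∀ᵐ ω ∂μ, ∃ k, l < k ∧ Z k ω ∉ B) {A : Set Ω}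
    (hA : MeasurableSet A) (f : Ω → ENNReal) :
    ∫⁻ ω in A, f ω ∂μ = ∑' a, ∫⁻ ω in A ∩ exitEvent Z B l a, f ω ∂μ := by
  have hmeas (a : ℕ) : MeasurableSet (A ∩ exitEvent Z B l a) :=
    hA.inter (ℱ.le _ _ (measurableSet_exitEvent hZ hB))
  rw [← lintegral_iUnion hmeas, ← inter_iUnion]
  · refine setLIntegral_congr (hexit.mono fun ω hω => propext ?_)
    exact (and_iff_left (mem_iUnion.2 (exists_mem_exitEvent hω))).symm
  · refine fun a b hab => disjoint_left.2 fun ω ha hb => hab ?_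
    have := (exitTime_eq_of_mem_exitEvent ha.2).symm.trans (exitTime_eq_of_mem_exitEvent hb.2)
    omega

namespace IsMarkovProcess

variable {μ : Measure Ω} {ℱ : Filtration ℕ m0} {T : Kernel E E} {A : Set Ω} {f : E → ENNReal}

lemma measurable (hZ : IsMarkovProcess μ ℱ Z T) (l : ℕ) : Measurable (Z l) :=
  (hZ.adapted l).mono (ℱ.le l) le_rfl

lemma setLIntegral_inter_preimage (hZ : IsMarkovProcess μ ℱ Z T) (hl : 1 ≤ l)
    (hA : MeasurableSet[ℱ l] A) (hB : MeasurableSet B) (hf : Measurable f) :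
    ∫⁻ ω in A ∩ Z (l + 1) ⁻¹' B, f (Z (l + 1) ω) ∂μ
      = ∫⁻ ω in A, ∫⁻ x in B, f x ∂(T (Z l ω)) ∂μ := by
  simp_rw [← lintegral_indicator hB f]
  rw [← hZ.setLIntegral_succ l hl A hA _ (hf.indicator hB), inter_comm,
    ← setLIntegral_indicator (hZ.measurable _ hB)]
  rfl

variable [IsMarkovKernel T]

lemma setLIntegral_stayEvent (hZ : IsMarkovProcess μ ℱ Z T) (hl : 1 ≤ l)
    (hA : MeasurableSet[ℱ l] A) (hB : MeasurableSet B) (hf : Measurable f) :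
    ∫⁻ ω in A ∩ stayEvent Z B l a, f (Z (l + a) ω) ∂μ
      = ∫⁻ ω in A, ∫⁻ x, f x ∂(((T.restrict hB) ^ a) (Z l ω)) ∂μ := by
  induction a generalizing f with
  | zero => simp only [stayEvent_zero, inter_univ, add_zero, pow_zero_apply, lintegral_dirac' _ hf]
  | succ a ih =>
    have hAstay := (ℱ.mono (Nat.le_add_right l a) _ hA).inter
      (measurableSet_stayEvent hZ.adapted hB)
    rw [stayEvent_succ, ← inter_assoc, ← add_assoc,
      hZ.setLIntegral_inter_preimage (by omega) hAstay hB hf, ih (hf.setLIntegral_kernel hB)]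
    simp_rw [lintegral_pow_succ' _ a _ hf, Kernel.restrict_apply]

lemma setLIntegral_exitEvent (hZ : IsMarkovProcess μ ℱ Z T) (hl : 1 ≤ l)
    (hA : MeasurableSet[ℱ l] A) (hB : MeasurableSet B) (hf : Measurable f) :
    ∫⁻ ω in A ∩ exitEvent Z B l a, f (Z (l + a + 1) ω) ∂μ
      = ∫⁻ ω in A, ∫⁻ y, ∫⁻ x in Bᶜ, f x ∂(T y) ∂(((T.restrict hB) ^ a) (Z l ω)) ∂μ := by
  have hAstay := (ℱ.mono (Nat.le_add_right l a) _ hA).inter (measurableSet_stayEvent hZ.adapted hB)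
  rw [exitEvent, ← inter_assoc, hZ.setLIntegral_inter_preimage (by omega) hAstay hB.compl hf,
    hZ.setLIntegral_stayEvent hl hA hB (hf.setLIntegral_kernel hB.compl)]

variable [IsFiniteMeasure μ]

lemma ae_forall_exists_notMem (hZ : IsMarkovProcess μ ℱ Z T) (hB : MeasurableSet B)
    (h0 : ∀ z, survival (T.restrict hB) z = 0) : ∀ᵐ ω ∂μ, ∀ l, ∃ k, l < k ∧ Z k ω ∉ B := by
  set K := T.restrict hB
  have hK := restrict_apply_univ_le_one T hB
  have hlate (l : ℕ) : ∀ᵐ ω ∂μ, ∃ k, l + 1 < k ∧ Z k ω ∉ B := by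
    have hle (a : ℕ) : μ {ω | ¬ ∃ k, l + 1 < k ∧ Z k ω ∉ B} ≤ ∫⁻ ω, (K ^ a) (Z (l + 1) ω) univ ∂μ :=
      calc _ ≤ μ (stayEvent Z B (l + 1) a) :=
            measure_mono fun ω (hω : ¬ _) k hlk _ => by_contra fun hkB => hω ⟨k, hlk, hkB⟩
        _ = ∫⁻ ω, (K ^ a) (Z (l + 1) ω) univ ∂μ := by
            simpa using hZ.setLIntegral_stayEvent (a := a) (Nat.le_add_left 1 l)
              MeasurableSet.univ hB (f := fun _ => 1) measurable_const
    have hinf : ⨅ a, ∫⁻ ω, (K ^ a) (Z (l + 1) ω) univ ∂μ = 0 := by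
      have hmeas (a : ℕ) : Measurable fun ω => (K ^ a) (Z (l + 1) ω) univ :=
        ((K ^ a).measurable_coe .univ).comp (hZ.measurable _)
      rw [← lintegral_iInf hmeas fun a b hab ω => antitone_pow_apply_univ hK _ hab]
      · exact (lintegral_congr fun ω => h0 _).trans lintegral_zero
      · simpa only [pow_zero_apply, measure_univ, lintegral_one] using measure_ne_top μ univ
    exact ae_iff.2 (le_zero_iff.1 ((le_iInf hle).trans hinf.le))
  filter_upwards [ae_all_iff.2 hlate] with ω hω l
  obtain ⟨k, hlk, hk⟩ := hω l
  exact ⟨k, by omega, hk⟩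

lemma setLIntegral_exitTime (hZ : IsMarkovProcess μ ℱ Z T) (hB : MeasurableSet B)
    (h0 : ∀ z, survival (T.restrict hB) z = 0) (hl : 1 ≤ l) (hA : MeasurableSet[ℱ l] A)
    (hf : Measurable f) :
    ∫⁻ ω in A, f (Z (exitTime Z B l ω) ω) ∂μ
      = ∫⁻ ω in A, ∫⁻ x, f x ∂(exitKernel T hB (Z l ω)) ∂μ := by
  have hexit := (hZ.ae_forall_exists_notMem hB h0).mono fun ω hω => hω l
  have hfB : Measurable fun y => ∫⁻ x in Bᶜ, f x ∂(T y) := hf.setLIntegral_kernel hB.compl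
  have hevent (a : ℕ) : ∫⁻ ω in A ∩ exitEvent Z B l a, f (Z (exitTime Z B l ω) ω) ∂μ
      = ∫⁻ ω in A ∩ exitEvent Z B l a, f (Z (l + a + 1) ω) ∂μ :=
    setLIntegral_congr_fun
      ((ℱ.le l _ hA).inter (ℱ.le _ _ (measurableSet_exitEvent hZ.adapted hB)))
      fun ω hω => by simp only [exitTime_eq_of_mem_exitEvent hω.2]
  rw [setLIntegral_eq_tsum_exitEvent hZ.adapted hB hexit (ℱ.le l _ hA)]
  simp_rw [hevent, hZ.setLIntegral_exitEvent hl hA hB hf, lintegral_exitKernel T hB hf]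
  exact (lintegral_tsum fun a =>
    ((hfB.lintegral_kernel (κ := (T.restrict hB) ^ a)).comp (hZ.measurable l)).aemeasurable).symm

end IsMarkovProcess

end MarkovProcess

section StrongMarkov

variable {Ω E : Type*} {m0 : MeasurableSpace Ω} {μ : Measure Ω} {ℱ : Filtration ℕ m0}
  {τ : Ω → ℕ} {A : Set Ω}

/-- `A` belongs to the `σ`-algebra of events prior to the random time `τ`. The `σ`-algebras `ℱ l`
are completed, so that the value `0` of a random time that is almost surely finite does no harm on
the null event where it is infinite. -/
def IsPriorEvent (μ : Measure Ω) (ℱ : Filtration ℕ m0) (τ : Ω → ℕ) (A : Set Ω) : Prop :=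
  ∀ l, EventuallyMeasurableSet (ℱ l) (ae μ) (A ∩ τ ⁻¹' {l})

lemma iUnion_inter_preimage_singleton (τ : Ω → ℕ) (A : Set Ω) : ⋃ l, A ∩ τ ⁻¹' {l} = A := by
  rw [← inter_iUnion, ← preimage_iUnion, iUnion_of_singleton, preimage_univ, inter_univ]

namespace IsPriorEvent

lemma nullMeasurableSet_inter (hA : IsPriorEvent μ ℱ τ A) (l : ℕ) :
    NullMeasurableSet (A ∩ τ ⁻¹' {l}) μ :=
  let ⟨t, ht, hAt⟩ := hA l
  (ℱ.le l t ht).nullMeasurableSet.congr hAt.symm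

lemma nullMeasurableSet (hA : IsPriorEvent μ ℱ τ A) : NullMeasurableSet A μ :=
  iUnion_inter_preimage_singleton τ A ▸ .iUnion hA.nullMeasurableSet_inter

lemma setLIntegral_eq_tsum (hA : IsPriorEvent μ ℱ τ A) (g : Ω → ENNReal) :
    ∫⁻ ω in A, g ω ∂μ = ∑' l, ∫⁻ ω in A ∩ τ ⁻¹' {l}, g ω ∂μ := by
  conv_lhs => rw [← iUnion_inter_preimage_singleton τ A]
  refine lintegral_iUnion₀ hA.nullMeasurableSet_inter (fun l k hlk => ?_) g
  exact (disjoint_left.2 fun ω hl hk => hlk (hl.2.symm.trans hk.2)).aedisjoint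

variable [MeasurableSpace E] {Z : ℕ → Ω → E} {B : Set E}

lemma inter_preimage (hA : IsPriorEvent μ ℱ τ A) (hZ : Adapted ℱ Z) (hB : MeasurableSet B) :
    IsPriorEvent μ ℱ τ (A ∩ (fun ω => Z (τ ω) ω) ⁻¹' B) := by
  intro l
  have heq : A ∩ (fun ω => Z (τ ω) ω) ⁻¹' B ∩ τ ⁻¹' {l} = A ∩ τ ⁻¹' {l} ∩ Z l ⁻¹' B := by
    ext ω
    simp only [mem_inter_iff, mem_preimage, mem_singleton_iff]
    constructor
    · rintro ⟨⟨hωA, hωB⟩, rfl⟩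
      exact ⟨⟨hωA, rfl⟩, hωB⟩
    · rintro ⟨⟨hωA, rfl⟩, hωB⟩
      exact ⟨⟨hωA, hωB⟩, rfl⟩
  exact heq ▸ MeasurableSet.inter (hA l) (MeasurableSet.eventuallyMeasurableSet (hZ l hB))

lemma aemeasurable_apply [MeasurableSpace.CountablyGenerated E] (hτ : IsPriorEvent μ ℱ τ univ)
    (hZ : Adapted ℱ Z) : AEMeasurable (fun ω => Z (τ ω) ω) μ :=
  NullMeasurable.aemeasurable fun _ hB =>
    univ_inter ((fun ω => Z (τ ω) ω) ⁻¹' _) ▸ (hτ.inter_preimage hZ hB).nullMeasurableSet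

lemma exitTime (hA : IsPriorEvent μ ℱ τ A) (hZ : Adapted ℱ Z) (hB : MeasurableSet B)
    (hexit : ∀ᵐ ω ∂μ, ∀ l, ∃ k, l < k ∧ Z k ω ∉ B) :
    IsPriorEvent μ ℱ (fun ω => exitTime Z B (τ ω) ω) A := by
  intro k
  have hmeas (l a : ℕ) (hk : l + a + 1 = k) :
      EventuallyMeasurableSet (ℱ k) (ae μ) (A ∩ τ ⁻¹' {l} ∩ exitEvent Z B l a) := by
    obtain ⟨t, ht, hAt⟩ := hA l
    refine ⟨t ∩ exitEvent Z B l a, ?_, hAt.inter .rfl⟩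
    exact hk ▸ (ℱ.mono (by omega) _ ht).inter (measurableSet_exitEvent hZ hB)
  refine EventuallyMeasurableSet.congr (t := ⋃ l, ⋃ a, ⋃ _ : l + a + 1 = k,
    A ∩ τ ⁻¹' {l} ∩ exitEvent Z B l a) ?_ (hexit.mono fun ω hω => propext ?_)
  · exact MeasurableSet.iUnion fun l => .iUnion fun a => .iUnion fun hk => hmeas l a hk
  · change ω ∈ A ∩ _ ↔ ω ∈ iUnion _
    simp only [mem_iUnion, mem_inter_iff, mem_preimage, mem_singleton_iff]
    constructor
    · rintro ⟨hωA, rfl⟩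
      obtain ⟨a, ha⟩ := exists_mem_exitEvent (hω (τ ω))
      exact ⟨τ ω, a, (exitTime_eq_of_mem_exitEvent ha).symm, ⟨hωA, rfl⟩, ha⟩
    · rintro ⟨l, a, rfl, ⟨hωA, rfl⟩, ha⟩
      exact ⟨hωA, exitTime_eq_of_mem_exitEvent ha⟩

end IsPriorEvent

lemma isPriorEvent_const (l : ℕ) : IsPriorEvent μ ℱ (fun _ => l) univ := fun k =>
  MeasurableSet.eventuallyMeasurableSet (MeasurableSet.univ.inter (measurable_const (.singleton k)))

variable [IsFiniteMeasure μ] [MeasurableSpace E] {Z : ℕ → Ω → E} {B : Set E} {T : Kernel E E}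
  [IsMarkovKernel T]

lemma IsMarkovProcess.setLIntegral_exitTime_apply (hZ : IsMarkovProcess μ ℱ Z T)
    (hB : MeasurableSet B) (h0 : ∀ z, survival (T.restrict hB) z = 0)
    (hτ : ∀ᵐ ω ∂μ, 1 ≤ τ ω) (hA : IsPriorEvent μ ℱ τ A) {f : E → ENNReal} (hf : Measurable f) :
    ∫⁻ ω in A, f (Z (exitTime Z B (τ ω) ω) ω) ∂μ
      = ∫⁻ ω in A, ∫⁻ x, f x ∂(exitKernel T hB (Z (τ ω) ω)) ∂μ := by
  rw [hA.setLIntegral_eq_tsum, hA.setLIntegral_eq_tsum]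
  refine tsum_congr fun l => ?_
  have hτl (g : ℕ → Ω → ENNReal) :
      ∫⁻ ω in A ∩ τ ⁻¹' {l}, g (τ ω) ω ∂μ = ∫⁻ ω in A ∩ τ ⁻¹' {l}, g l ω ∂μ := by
    refine lintegral_congr_ae ((ae_restrict_iff'₀ (hA.nullMeasurableSet_inter l)).2 ?_)
    exact ae_of_all _ fun ω hω => congrArg (g · ω) hω.2
  rw [hτl fun l ω => f (Z (exitTime Z B l ω) ω),
    hτl fun l ω => ∫⁻ x, f x ∂(exitKernel T hB (Z l ω))]
  obtain ⟨t, ht, hAt⟩ := hA l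
  rcases l.eq_zero_or_pos with rfl | hl
  · have hnull : μ (A ∩ τ ⁻¹' {0}) = 0 :=
      measure_mono_null (fun ω hω => not_le.2 (Nat.lt_one_iff.2 hω.2)) (ae_iff.1 hτ)
    rw [setLIntegral_measure_zero _ _ hnull, setLIntegral_measure_zero _ _ hnull]
  · rw [setLIntegral_congr hAt, setLIntegral_congr hAt, hZ.setLIntegral_exitTime hB h0 hl ht hf]

end StrongMarkov

section WalkProcess

lemma measure_inter_eq_setLIntegral_of_condExp {Ω : Type*} {m m0 : MeasurableSpace Ω}
    {μ : Measure Ω} [IsFiniteMeasure μ] (hm : m ≤ m0) {A s : Set Ω} (hA : MeasurableSet[m] A)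
    (hs : MeasurableSet s) {g : Ω → ENNReal} (hg : Measurable g) (hg1 : ∀ ω, g ω ≤ 1)
    (hcond : μ[s.indicator fun _ => (1 : ℝ) | m] =ᵐ[μ] fun ω => (g ω).toReal) :
    μ (A ∩ s) = ∫⁻ ω in A, g ω ∂μ := by
  have hfin : ∫⁻ ω in A, g ω ∂μ ≠ ⊤ :=
    ne_top_of_le_ne_top (measure_ne_top μ A) ((lintegral_mono hg1).trans_eq (setLIntegral_one A))
  refine (ENNReal.toReal_eq_toReal_iff' (measure_ne_top μ _) hfin).1 ?_
  calc μ.real (A ∩ s) = ∫ ω in A, s.indicator (fun _ => (1 : ℝ)) ω ∂μ := by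
        rw [setIntegral_indicator hs, setIntegral_const, smul_eq_mul, mul_one]
    _ = ∫ ω in A, (μ[s.indicator fun _ => (1 : ℝ) | m]) ω ∂μ :=
        (setIntegral_condExp hm ((integrable_const 1).indicator hs) hA).symm
    _ = ∫ ω in A, (g ω).toReal ∂μ := setIntegral_congr_ae (hm A hA) (hcond.mono fun ω h _ => h)
    _ = (∫⁻ ω in A, g ω ∂μ).toReal :=
        integral_toReal hg.aemeasurable (ae_of_all _ fun ω => (hg1 ω).trans_lt ENNReal.one_lt_top)

lemma map_prodMk_eq_compProd {Ω E F : Type*} {m0 : MeasurableSpace Ω} {μ : Measure Ω}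
    [IsFiniteMeasure μ] [MeasurableSpace E] [MeasurableSpace F] {U : Ω → E} {V : Ω → F}
    (hU : AEMeasurable U μ) (hV : AEMeasurable V μ) (κ : Kernel E F) [IsMarkovKernel κ]
    (h : ∀ B A, MeasurableSet B → MeasurableSet A →
      μ (U ⁻¹' B ∩ V ⁻¹' A) = ∫⁻ ω in U ⁻¹' B, κ (U ω) A ∂μ) :
    μ.map (fun ω => (U ω, V ω)) = μ.map U ⊗ₘ κ := by
  refine Measure.ext_prod fun {B A} hB hA => ?_
  rw [Measure.map_apply_of_aemeasurable (hU.prodMk hV) (hB.prod hA),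
    Measure.compProd_apply_prod hB hA, Measure.restrict_map_of_aemeasurable hU hB,
    lintegral_map' (κ.measurable_coe hA).aemeasurable hU.restrict]
  exact h B A hB hA

variable {Ω : Type*} {X : ℕ → Ω → ℝ} {S0 : Ω → ℝ}

lemma Swalk_succ (ω : Ω) (n : ℕ) : Swalk X S0 ω (n + 1) = Swalk X S0 ω n + X (n + 1) ω := by
  rw [Swalk, Swalk, Finset.sum_Icc_succ_top n.succ_pos, add_assoc]

/-- The pair (last increment, position) of the walk, on which `walkKernel` acts. -/
noncomputable def walkState (X : ℕ → Ω → ℝ) (S0 : Ω → ℝ) (l : ℕ) (ω : Ω) : ℝ × ℝ :=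
  (X l ω, Swalk X S0 ω l)

variable {m0 : MeasurableSpace Ω} {ℱ : Filtration ℕ m0}

lemma adapted_walkState (hX : Adapted ℱ X) (hS0 : Measurable[ℱ 0] S0) :
    Adapted ℱ (walkState X S0) := by
  intro l
  refine (hX l).prodMk ((hS0.mono (ℱ.mono l.zero_le) le_rfl).add ?_)
  exact Finset.measurable_sum _ fun k hk =>
    (hX k).mono (ℱ.mono (Finset.mem_Icc.1 hk).2) le_rfl

lemma isMarkovProcess_walkState {μ : Measure Ω} [IsFiniteMeasure μ] {P : Kernel ℝ ℝ}
    [IsMarkovKernel P] (hX : Adapted ℱ X) (hS0 : Measurable[ℱ 0] S0)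
    (hMarkov : ∀ l, 1 ≤ l → ∀ A : Set ℝ, MeasurableSet A →
      μ[fun ω => A.indicator (fun _ => (1 : ℝ)) (X (l + 1) ω) | ℱ l]
        =ᵐ[μ] fun ω => (P (X l ω) A).toReal) :
    IsMarkovProcess μ ℱ (walkState X S0) (walkKernel P 1) where
  adapted := adapted_walkState hX hS0
  setLIntegral_succ l hl A hA f hf := by
    have hXm (k : ℕ) : Measurable (X k) := (hX k).mono (ℱ.le k) le_rfl
    have hadapted := adapted_walkState hX hS0 l
    have hZ : Measurable (walkState X S0 l) := hadapted.mono (ℱ.le l) le_rfl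
    have hlaw : (μ.restrict A).map (fun ω => (walkState X S0 l ω, X (l + 1) ω))
        = (μ.restrict A).map (walkState X S0 l) ⊗ₘ P.comap Prod.fst measurable_fst := by
      refine map_prodMk_eq_compProd hZ.aemeasurable (hXm _).aemeasurable _ fun B D hB hD => ?_
      rw [Measure.restrict_restrict (hZ hB), Measure.restrict_apply ((hZ hB).inter (hXm _ hD)),
        inter_right_comm]
      exact measure_inter_eq_setLIntegral_of_condExp (ℱ.le l) ((hadapted hB).inter hA) (hXm _ hD)
        ((P.measurable_coe hD).comp (hXm l)) (fun ω => prob_le_one) (hMarkov l hl D hD)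
    have hg : Measurable fun p : (ℝ × ℝ) × ℝ => f (p.2, p.1.2 + 1 * p.2) := hf.comp (by fun_prop)
    calc ∫⁻ ω in A, f (walkState X S0 (l + 1) ω) ∂μ
        = ∫⁻ p, f (p.2, p.1.2 + 1 * p.2)
            ∂((μ.restrict A).map fun ω => (walkState X S0 l ω, X (l + 1) ω)) := by
          rw [lintegral_map hg (hZ.prodMk (hXm _))]
          simp only [walkState, Swalk_succ, one_mul]
      _ = ∫⁻ ω in A, ∫⁻ y, f (y, (walkState X S0 l ω).2 + 1 * y) ∂(P (X l ω)) ∂μ := by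
          rw [hlaw, Measure.lintegral_compProd hg, lintegral_map hg.lintegral_kernel_prod_right' hZ]
          rfl
      _ = ∫⁻ ω in A, ∫⁻ y, f y ∂(walkKernel P 1 (walkState X S0 l ω)) ∂μ := by
          simp_rw [lintegral_walkKernel P 1 hf]
          rfl

end WalkProcess

section OvershootChain

variable {Ω : Type*} {X : ℕ → Ω → ℝ} {S0 : Ω → ℝ}

/-- The time of the `n`-th up-crossing of level `0`. -/
noncomputable def upcrossTime (X : ℕ → Ω → ℝ) (S0 : Ω → ℝ) (n : ℕ) (ω : Ω) : ℕ :=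
  (crossTimes 0 0 (Swalk X S0 ω) n).2

/-- The state of the walk at its `n`-th up-crossing of level `0`; unlike the overshoot, which is
its second component, it evolves as a Markov chain. -/
noncomputable def upcrossState (X : ℕ → Ω → ℝ) (S0 : Ω → ℝ) (n : ℕ) (ω : Ω) : ℝ × ℝ :=
  walkState X S0 (upcrossTime X S0 n ω) ω

lemma upcrossTime_succ (n : ℕ) (ω : Ω) :
    upcrossTime X S0 (n + 1) ω = exitTime (walkState X S0) lowerHalf
      (exitTime (walkState X S0) upperHalf (upcrossTime X S0 n ω) ω) ω := by
  simp only [exitTime, mem_lowerHalf, mem_upperHalf, not_le]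
  rfl

lemma Oproc_succ (n : ℕ) : Oproc X S0 (n + 1) = fun ω => (upcrossState X S0 (n + 1) ω).2 :=
  funext fun _ => if_neg n.succ_ne_zero

lemma upcrossState_snd_mem_Ioc {M : ℝ} (hM : ∀ l, 1 ≤ l → ∀ ω, X l ω ≤ M) {ω : Ω}
    (hdown : ∀ l, ∃ k, l < k ∧ walkState X S0 k ω ∉ upperHalf)
    (hup : ∀ l, ∃ k, l < k ∧ walkState X S0 k ω ∉ lowerHalf) (n : ℕ) :
    (upcrossState X S0 (n + 1) ω).2 ∈ Ioc 0 M := by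
  obtain ⟨a, ha⟩ := exists_mem_exitEvent (hdown (upcrossTime X S0 n ω))
  set t := upcrossTime X S0 n ω + a + 1
  obtain ⟨b, hb⟩ := exists_mem_exitEvent (hup t)
  have htime : upcrossTime X S0 (n + 1) ω = t + b + 1 := by
    rw [upcrossTime_succ, exitTime_eq_of_mem_exitEvent ha, exitTime_eq_of_mem_exitEvent hb]
  have hdescent : Swalk X S0 ω t < 0 := not_le.1 ha.2
  have hprev : Swalk X S0 ω (t + b) ≤ 0 := by
    rcases b.eq_zero_or_pos with rfl | hpos
    · exact hdescent.le
    · exact hb.1 (t + b) (by omega) le_rfl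
  have hlast : 0 < Swalk X S0 ω (t + b + 1) := not_le.1 hb.2
  rw [upcrossState, htime]
  refine ⟨hlast, ?_⟩
  change Swalk X S0 ω (t + b + 1) ≤ M
  have := hM (t + b + 1) (by omega) ω
  rw [Swalk_succ]
  linarith

variable {m0 : MeasurableSpace Ω} {μ : Measure Ω} [IsFiniteMeasure μ] {ℱ : Filtration ℕ m0}
  {P : Kernel ℝ ℝ} [IsMarkovKernel P] {M h : ℝ} {c : ENNReal}

namespace IsCenteredMinorized

lemma ae_forall_exists_notMem_upperHalf (hP : IsCenteredMinorized P M h c)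
    (hZ : IsMarkovProcess μ ℱ (walkState X S0) (walkKernel P 1)) :
    ∀ᵐ ω ∂μ, ∀ l, ∃ k, l < k ∧ walkState X S0 k ω ∉ upperHalf :=
  hZ.ae_forall_exists_notMem measurableSet_upperHalf (hP.survival_killedWalk_eq_zero (Or.inl rfl))

lemma ae_forall_exists_notMem_lowerHalf (hP : IsCenteredMinorized P M h c)
    (hZ : IsMarkovProcess μ ℱ (walkState X S0) (walkKernel P 1)) :
    ∀ᵐ ω ∂μ, ∀ l, ∃ k, l < k ∧ walkState X S0 k ω ∉ lowerHalf :=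
  hZ.ae_forall_exists_notMem measurableSet_lowerHalf hP.survival_restrict_lowerHalf_eq_zero

lemma ae_upcrossState_snd_mem_Ioc (hP : IsCenteredMinorized P M h c)
    (hZ : IsMarkovProcess μ ℱ (walkState X S0) (walkKernel P 1))
    (hM : ∀ l, 1 ≤ l → ∀ ω, X l ω ≤ M) (n : ℕ) :
    ∀ᵐ ω ∂μ, (upcrossState X S0 (n + 1) ω).2 ∈ Ioc 0 M := by
  filter_upwards [hP.ae_forall_exists_notMem_upperHalf hZ,
    hP.ae_forall_exists_notMem_lowerHalf hZ] with ω hdown hup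
  exact upcrossState_snd_mem_Ioc hM hdown hup n

lemma isPriorEvent_descentTime {τ : Ω → ℕ} {A : Set Ω} (hP : IsCenteredMinorized P M h c)
    (hZ : IsMarkovProcess μ ℱ (walkState X S0) (walkKernel P 1)) (hA : IsPriorEvent μ ℱ τ A) :
    IsPriorEvent μ ℱ (fun ω => exitTime (walkState X S0) upperHalf (τ ω) ω) A :=
  hA.exitTime hZ.adapted measurableSet_upperHalf (hP.ae_forall_exists_notMem_upperHalf hZ)

lemma isPriorEvent_upcrossTime_add (hP : IsCenteredMinorized P M h c)
    (hZ : IsMarkovProcess μ ℱ (walkState X S0) (walkKernel P 1)) {n : ℕ} {A : Set Ω}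
    (hA : IsPriorEvent μ ℱ (upcrossTime X S0 n) A) (k : ℕ) :
    IsPriorEvent μ ℱ (upcrossTime X S0 (n + k)) A := by
  induction k with
  | zero => exact hA
  | succ k ih =>
    rw [← add_assoc, funext (upcrossTime_succ (X := X) (S0 := S0) (n + k))]
    exact (hP.isPriorEvent_descentTime hZ ih).exitTime hZ.adapted measurableSet_lowerHalf
      (hP.ae_forall_exists_notMem_lowerHalf hZ)

lemma isPriorEvent_upcrossTime_univ (hP : IsCenteredMinorized P M h c)
    (hZ : IsMarkovProcess μ ℱ (walkState X S0) (walkKernel P 1)) (n : ℕ) :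
    IsPriorEvent μ ℱ (upcrossTime X S0 n) univ :=
  n.zero_add ▸ hP.isPriorEvent_upcrossTime_add hZ (isPriorEvent_const 0) n

lemma aemeasurable_upcrossState (hP : IsCenteredMinorized P M h c)
    (hZ : IsMarkovProcess μ ℱ (walkState X S0) (walkKernel P 1)) (n : ℕ) :
    AEMeasurable (upcrossState X S0 n) μ :=
  (hP.isPriorEvent_upcrossTime_univ hZ n).aemeasurable_apply hZ.adapted

lemma setLIntegral_upcrossState_succ (hP : IsCenteredMinorized P M h c)
    (hZ : IsMarkovProcess μ ℱ (walkState X S0) (walkKernel P 1)) {n : ℕ} {A : Set Ω}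
    (hA : IsPriorEvent μ ℱ (upcrossTime X S0 (n + 1)) A) {f : ℝ × ℝ → ENNReal}
    (hf : Measurable f) :
    ∫⁻ ω in A, f (upcrossState X S0 (n + 2) ω) ∂μ
      = ∫⁻ ω in A, ∫⁻ y, f y ∂(returnKernel P (upcrossState X S0 (n + 1) ω)) ∂μ := by
  have hdown := hP.ae_forall_exists_notMem_upperHalf hZ
  have hup := hP.ae_forall_exists_notMem_lowerHalf hZ
  have hdown1 : ∀ᵐ ω ∂μ,
      1 ≤ exitTime (walkState X S0) upperHalf (upcrossTime X S0 (n + 1) ω) ω := by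
    filter_upwards [hdown] with ω hω
    exact one_le_exitTime (hω _)
  have hup1 : ∀ᵐ ω ∂μ, 1 ≤ upcrossTime X S0 (n + 1) ω := by
    filter_upwards [hup] with ω hω
    exact upcrossTime_succ (X := X) n ω ▸ one_le_exitTime (hω _)
  simp_rw [returnKernel, Kernel.lintegral_comp _ _ _ hf, upcrossState, upcrossTime_succ (n + 1)]
  rw [hZ.setLIntegral_exitTime_apply measurableSet_lowerHalf
      hP.survival_restrict_lowerHalf_eq_zero hdown1 (hP.isPriorEvent_descentTime hZ hA) hf]
  exact hZ.setLIntegral_exitTime_apply measurableSet_upperHalf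
    (hP.survival_killedWalk_eq_zero (Or.inl rfl)) hup1 hA hf.lintegral_kernel

lemma setLIntegral_upcrossState_add (hP : IsCenteredMinorized P M h c)
    (hZ : IsMarkovProcess μ ℱ (walkState X S0) (walkKernel P 1))
    (hM : ∀ l, 1 ≤ l → ∀ ω, X l ω ≤ M) {n : ℕ} {A : Set Ω}
    (hA : IsPriorEvent μ ℱ (upcrossTime X S0 (n + 1)) A) (k : ℕ) {f : ℝ × ℝ → ENNReal}
    (hf : Measurable f) :
    ∫⁻ ω in A, f (upcrossState X S0 (n + 1 + k) ω) ∂μ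
      = ∫⁻ ω in A, ∫⁻ y, f y ∂((clampedReturnKernel P M ^ k) (upcrossState X S0 (n + 1) ω)) ∂μ := by
  have := hP.isMarkovKernel_clampedReturnKernel
  induction k generalizing f with
  | zero => simp only [add_zero, pow_zero_apply, lintegral_dirac' _ hf]
  | succ k ih =>
    have hindex : n + 1 + k = n + k + 1 := by omega
    simp_rw [lintegral_pow_succ' _ k _ hf]
    rw [← ih hf.lintegral_kernel, ← add_assoc, hindex]
    rw [hP.setLIntegral_upcrossState_succ hZ (hindex ▸ hP.isPriorEvent_upcrossTime_add hZ hA k) hf]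
    refine lintegral_congr_ae (ae_restrict_of_ae ?_)
    filter_upwards [hP.ae_upcrossState_snd_mem_Ioc hZ hM (n + k)] with ω hω
    rw [clampedReturnKernel_apply P (Ioc_subset_Icc_self hω)]

lemma map_upcrossState_prodMk (hP : IsCenteredMinorized P M h c)
    (hZ : IsMarkovProcess μ ℱ (walkState X S0) (walkKernel P 1))
    (hM : ∀ l, 1 ≤ l → ∀ ω, X l ω ≤ M) (n k : ℕ) :
    μ.map (fun ω => (upcrossState X S0 (n + 1) ω, upcrossState X S0 (n + k + 1) ω))
      = μ.map (upcrossState X S0 (n + 1)) ⊗ₘ (clampedReturnKernel P M ^ k) := by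
  have := hP.isMarkovKernel_clampedReturnKernel
  have hindex : n + k + 1 = n + 1 + k := by omega
  have hmeas := hP.aemeasurable_upcrossState hZ
  refine map_prodMk_eq_compProd (hmeas _) (hmeas _) _ fun B A hB hA => ?_
  have hprior := (hP.isPriorEvent_upcrossTime_univ hZ (n + 1)).inter_preimage hZ.adapted hB
  rw [univ_inter] at hprior
  have hlaw := hP.setLIntegral_upcrossState_add hZ hM hprior k
    (measurable_one.indicator hA : Measurable (A.indicator (1 : ℝ × ℝ → ENNReal)))
  simp_rw [lintegral_indicator_one hA] at hlaw
  refine Eq.trans ?_ hlaw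
  change _ = ∫⁻ ω in upcrossState X S0 (n + 1) ⁻¹' B,
    (upcrossState X S0 (n + 1 + k) ⁻¹' A).indicator 1 ω ∂μ
  have hnull : NullMeasurableSet (upcrossState X S0 (n + 1 + k) ⁻¹' A)
      (μ.restrict (upcrossState X S0 (n + 1) ⁻¹' B)) :=
    (hmeas _).restrict.nullMeasurableSet_preimage hA
  rw [lintegral_indicator_one₀ hnull, Measure.restrict_apply₀ hnull, hindex, inter_comm]

end IsCenteredMinorized

end OvershootChain

section LawOfLargeNumbers

variable {Ω : Type*} {m0 : MeasurableSpace Ω} {μ : Measure Ω}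

lemma integral_sq_sum_range_succ {f : ℕ → Ω → ℝ}
    (hint : ∀ i j, Integrable (fun ω => f i ω * f j ω) μ) (n : ℕ) :
    ∫ ω, (∑ i ∈ Finset.range (n + 1), f i ω) ^ 2 ∂μ =
      ∫ ω, (∑ i ∈ Finset.range n, f i ω) ^ 2 ∂μ +
        2 * ∑ i ∈ Finset.range n, ∫ ω, f i ω * f n ω ∂μ + ∫ ω, f n ω * f n ω ∂μ := by
  have hexpand ω : (∑ i ∈ Finset.range (n + 1), f i ω) ^ 2 =
      (∑ i ∈ Finset.range n, f i ω) ^ 2 + 2 * ∑ i ∈ Finset.range n, f i ω * f n ω +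
        f n ω * f n ω := by
    rw [Finset.sum_range_succ, ← Finset.sum_mul]
    ring
  have hsq : Integrable (fun ω => (∑ i ∈ Finset.range n, f i ω) ^ 2) μ := by
    simp_rw [sq, Finset.sum_mul_sum]
    exact integrable_finsetSum _ fun i _ => integrable_finsetSum _ fun j _ => hint i j
  have hcross : Integrable (fun ω => 2 * ∑ i ∈ Finset.range n, f i ω * f n ω) μ :=
    (integrable_finsetSum _ fun i _ => hint i n).const_mul 2
  have hquad : Integrable (fun ω => (∑ i ∈ Finset.range n, f i ω) ^ 2 +
      2 * ∑ i ∈ Finset.range n, f i ω * f n ω) μ := hsq.add hcross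
  simp_rw [hexpand]
  rw [integral_add hquad (hint n n), integral_add hsq hcross, integral_const_mul,
    integral_finsetSum _ fun i _ => hint i n]

lemma integral_sq_sum_range_le {f : ℕ → Ω → ℝ} {ρ : ℕ → ℝ} (hρ : Summable ρ)
    (hint : ∀ i j, Integrable (fun ω => f i ω * f j ω) μ)
    (hcorr : ∀ i k, |∫ ω, f i ω * f (i + k) ω ∂μ| ≤ ρ k) (n : ℕ) :
    ∫ ω, (∑ i ∈ Finset.range n, f i ω) ^ 2 ∂μ ≤ n * (2 * ∑' k, ρ k) := by
  have hnonneg k : 0 ≤ ρ k := (abs_nonneg _).trans (hcorr 0 k)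
  have hcorr' i k : ∫ ω, f i ω * f (i + k) ω ∂μ ≤ ρ k := (le_abs_self _).trans (hcorr i k)
  induction n with
  | zero => simp
  | succ n ih =>
    have hcross : ∑ i ∈ Finset.range n, ∫ ω, f i ω * f n ω ∂μ ≤
        ∑ k ∈ Finset.range n, ρ (k + 1) := by
      rw [← Finset.sum_range_reflect (fun k => ρ (k + 1))]
      refine Finset.sum_le_sum fun i hi => ?_
      have := hcorr' i (n - 1 - i + 1)
      rwa [show i + (n - 1 - i + 1) = n by grind] at this
    have htotal : ∑ k ∈ Finset.range n, ρ (k + 1) + ρ 0 ≤ ∑' k, ρ k := by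
      rw [← Finset.sum_range_succ']
      exact hρ.sum_le_tsum _ fun k _ => hnonneg k
    have hdiag : ∫ ω, f n ω * f n ω ∂μ ≤ ρ 0 := hcorr' n 0
    have := hnonneg 0
    rw [integral_sq_sum_range_succ hint]
    push_cast
    linarith

lemma ae_tendsto_zero_of_summable_integral_norm {E : Type*} [NormedAddCommGroup E]
    {F : ℕ → Ω → E} (hF : ∀ m, Integrable (F m) μ) (hsum : Summable fun m => ∫ ω, ‖F m ω‖ ∂μ) :
    ∀ᵐ ω ∂μ, Tendsto (fun m => F m ω) atTop (nhds 0) := by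
  have hne : ∑' m, eLpNorm (F m) 1 μ ≠ ⊤ := by
    simp_rw [eLpNorm_one_eq_lintegral_enorm, ← ofReal_integral_norm_eq_lintegral_enorm (hF _)]
    exact hsum.tsum_ofReal_ne_top
  filter_upwards [summable_norm_of_tsum_eLpNorm_ne_top le_rfl
    (fun m => (hF m).aestronglyMeasurable) hne] with ω hω
  exact tendsto_zero_iff_norm_tendsto_zero.2 hω.tendsto_atTop_zero

lemma eventually_succ_sq_le_mul_sq {a : ℝ} (ha : 1 < a) :
    ∀ᶠ n : ℕ in atTop, (((n + 1) ^ 2 : ℕ) : ℝ) ≤ a * (n ^ 2 : ℕ) := by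
  have hratio : Tendsto (fun n : ℕ => (1 + 1 / (n : ℝ)) ^ 2) atTop (nhds 1) := by
    simpa using (tendsto_one_div_atTop_nhds_zero_nat (𝕜 := ℝ)).const_add 1 |>.pow 2
  filter_upwards [hratio.eventually_le_const ha, eventually_gt_atTop 0] with n hn hpos
  calc (((n + 1) ^ 2 : ℕ) : ℝ) = (1 + 1 / (n : ℝ)) ^ 2 * (n ^ 2 : ℕ) := by
        push_cast
        field_simp
    _ ≤ a * (n ^ 2 : ℕ) := by gcongr

lemma tendsto_average_of_tendsto_average_sq {x : ℕ → ℝ} {K l : ℝ} (hx : ∀ i, |x i| ≤ K)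
    (h : Tendsto (fun m : ℕ => (∑ i ∈ Finset.range (m ^ 2), x i) / ((m ^ 2 : ℕ) : ℝ)) atTop
      (nhds l)) :
    Tendsto (fun n : ℕ => (∑ i ∈ Finset.range n, x i) / (n : ℝ)) atTop (nhds l) := by
  -- Adding `K` to each term makes the partial sums monotone.
  have hshift {n : ℕ} (hn : 0 < n) : (∑ i ∈ Finset.range n, (x i + K)) / (n : ℝ) =
      (∑ i ∈ Finset.range n, x i) / (n : ℝ) + K := by
    rw [Finset.sum_add_distrib, Finset.sum_const, Finset.card_range, nsmul_eq_mul, add_div,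
      mul_div_cancel_left₀ _ (by positivity)]
  have hmono : Monotone fun n => ∑ i ∈ Finset.range n, (x i + K) :=
    monotone_nat_of_le_succ fun n => by
      rw [Finset.sum_range_succ]
      linarith [(abs_le.1 (hx n)).1]
  have hlim := tendsto_div_of_monotone_of_exists_subseq_tendsto_div _ (l + K) hmono fun a ha =>
    ⟨fun n => n ^ 2, eventually_succ_sq_le_mul_sq ha, tendsto_pow_atTop two_ne_zero,
      (h.add_const K).congr' <| (eventually_gt_atTop 0).mono fun m hm =>
        (hshift (by positivity)).symm⟩
  simpa using (hlim.congr' <| (eventually_gt_atTop 0).mono fun n hn => hshift hn).sub_const K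

theorem ae_tendsto_average_zero_of_summable_correlations [IsFiniteMeasure μ] {f : ℕ → Ω → ℝ}
    {K : ℝ} {ρ : ℕ → ℝ} (hf : ∀ j, AEStronglyMeasurable (f j) μ) (hK : ∀ j ω, |f j ω| ≤ K)
    (hρ : Summable ρ) (hcorr : ∀ i k, |∫ ω, f i ω * f (i + k) ω ∂μ| ≤ ρ k) :
    ∀ᵐ ω ∂μ, Tendsto (fun n : ℕ => (∑ i ∈ Finset.range n, f i ω) / (n : ℝ)) atTop (nhds 0) := by
  have hint i j : Integrable (fun ω => f i ω * f j ω) μ :=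
    .of_bound ((hf i).mul (hf j)) (K * K) <| ae_of_all _ fun ω => by
      rw [norm_mul]
      exact mul_le_mul (hK i ω) (hK j ω) (abs_nonneg _) ((abs_nonneg _).trans (hK i ω))
  set avg : ℕ → Ω → ℝ := fun m ω => (∑ i ∈ Finset.range (m ^ 2), f i ω) / ((m ^ 2 : ℕ) : ℝ)
  have havg m : Integrable (fun ω => avg m ω ^ 2) μ := by
    simp_rw [avg, div_pow, sq (Finset.sum _ _), Finset.sum_mul_sum]
    exact (integrable_finsetSum _ fun i _ => integrable_finsetSum _ fun j _ => hint i j).div_const _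
  have hle m : ∫ ω, ‖avg m ω ^ 2‖ ∂μ ≤ 2 * (∑' k, ρ k) * (1 / (m : ℝ) ^ 2) := by
    simp_rw [Real.norm_of_nonneg (sq_nonneg (avg m _)), avg, div_pow, integral_div]
    rcases m.eq_zero_or_pos with rfl | hm
    · simp
    rw [div_le_iff₀ (by positivity)]
    refine (integral_sq_sum_range_le hρ hint hcorr (m ^ 2)).trans_eq ?_
    push_cast
    field_simp
  have hsum : Summable fun m => ∫ ω, ‖avg m ω ^ 2‖ ∂μ :=
    .of_nonneg_of_le (fun m => integral_nonneg fun _ => norm_nonneg _) hle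
      ((Real.summable_one_div_nat_pow.2 one_lt_two).mul_left _)
  filter_upwards [ae_tendsto_zero_of_summable_integral_norm havg hsum] with ω hω
  refine tendsto_average_of_tendsto_average_sq (fun i => hK i ω) ?_
  rw [tendsto_zero_iff_abs_tendsto_zero]
  simpa only [avg, Function.comp_def, Real.sqrt_sq_eq_abs, Real.sqrt_zero] using hω.sqrt

end LawOfLargeNumbers

section PairLaws

variable {Ω E : Type*} {m0 : MeasurableSpace Ω} [MeasurableSpace E] {μ : Measure Ω}
  {Y : ℕ → Ω → E} {Q : Kernel E E} {π : Measure E} {r : ℝ}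

/-- The pairs `(Yₙ, Yₙ₊ₖ)` have the laws they would have if `Y` were a Markov chain with kernel
`Q`. Convergence in law and the law of large numbers need no more of the Markov property. -/
structure HasMarkovPairLaws (μ : Measure Ω) (Y : ℕ → Ω → E) (Q : Kernel E E) : Prop where
  aemeasurable : ∀ n, AEMeasurable (Y n) μ
  map_prodMk : ∀ n k, μ.map (fun ω => (Y n ω, Y (n + k) ω)) = μ.map (Y n) ⊗ₘ (Q ^ k)

namespace HasMarkovPairLaws

variable [IsProbabilityMeasure μ] [IsMarkovKernel Q]

lemma abs_integral_mul_sub_le (hY : HasMarkovPairLaws μ Y Q) (hQ : UniformlyErgodic Q π r)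
    {f g : E → ℝ} {K a b : ℝ} (hf : Measurable f) (hfK : ∀ z, |f z| ≤ K) (hg : Measurable g)
    (hgab : ∀ z, g z ∈ Icc a b) (n k : ℕ) :
    |∫ ω, f (Y n ω) * (g (Y (n + k) ω) - ∫ z, g z ∂π) ∂μ| ≤ K * ((b - a) * r ^ k) := by
  set m := ∫ z, g z ∂π
  have hlaw : IsProbabilityMeasure (μ.map (Y n)) :=
    Measure.isProbabilityMeasure_map (hY.aemeasurable n)
  have hmeas : Measurable fun p : E × E => f p.1 * (g p.2 - m) := by fun_prop
  have hint : Integrable (fun p : E × E => f p.1 * (g p.2 - m)) (μ.map (Y n) ⊗ₘ (Q ^ k)) := by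
    have hsub : Integrable (fun p : E × E => g p.2 - m) (μ.map (Y n) ⊗ₘ (Q ^ k)) :=
      (Integrable.of_mem_Icc a b (hg.comp measurable_snd).aemeasurable
        (ae_of_all _ fun p => hgab p.2)).sub (integrable_const m)
    exact hsub.bdd_mul (hf.comp measurable_fst).aestronglyMeasurable
      (ae_of_all _ fun p => hfK p.1)
  have hdisint : ∫ ω, f (Y n ω) * (g (Y (n + k) ω) - m) ∂μ =
      ∫ y, f y * (∫ z, g z ∂((Q ^ k) y) - m) ∂(μ.map (Y n)) := by
    rw [← integral_map (f := fun p : E × E => f p.1 * (g p.2 - m))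
      ((hY.aemeasurable n).prodMk (hY.aemeasurable (n + k))) hmeas.aestronglyMeasurable,
      hY.map_prodMk, Measure.integral_compProd hint]
    refine integral_congr_ae (ae_of_all _ fun y => ?_)
    have hgint : Integrable g ((Q ^ k) y) :=
      .of_mem_Icc a b hg.aemeasurable (ae_of_all _ hgab)
    simp [integral_const_mul, integral_sub hgint (integrable_const m)]
  have hpoint y : ‖f y * (∫ z, g z ∂((Q ^ k) y) - m)‖ ≤ K * ((b - a) * r ^ k) := by
    rw [norm_mul]
    exact mul_le_mul (hfK y) (hQ k y g a b hg hgab) (norm_nonneg _) ((abs_nonneg _).trans (hfK y))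
  simpa [hdisint] using norm_integral_le_of_norm_le_const (μ := μ.map (Y n)) (ae_of_all _ hpoint)

lemma abs_measureReal_map_sub_le (hY : HasMarkovPairLaws μ Y Q) (hQ : UniformlyErgodic Q π r)
    {A : Set E} (hA : MeasurableSet A) (n : ℕ) :
    |(μ.map (Y n)).real A - π.real A| ≤ r ^ n := by
  have hind : Measurable (A.indicator (1 : E → ℝ)) := measurable_one.indicator hA
  have h01 z : A.indicator (1 : E → ℝ) z ∈ Icc (0 : ℝ) 1 := by
    by_cases hz : z ∈ A <;> simp [hz]
  have hbound := hY.abs_integral_mul_sub_le hQ (f := 1) (K := 1) measurable_one (by simp) hind h01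
    0 n
  have hint : Integrable (fun ω => A.indicator (1 : E → ℝ) (Y n ω)) μ :=
    .of_mem_Icc 0 1 (hind.comp_aemeasurable (hY.aemeasurable n)) (ae_of_all _ fun ω => h01 _)
  have hlaw : ∫ ω, A.indicator (1 : E → ℝ) (Y n ω) ∂μ = (μ.map (Y n)).real A := by
    rw [← integral_map (hY.aemeasurable n) hind.aestronglyMeasurable, integral_indicator_one hA]
  simpa [integral_sub hint (integrable_const _), hlaw, integral_indicator_one hA] using hbound

theorem ae_tendsto_average [IsProbabilityMeasure π] (hY : HasMarkovPairLaws μ Y Q)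
    (hQ : UniformlyErgodic Q π r) (hr0 : 0 ≤ r) (hr1 : r < 1) {φ : E → ℝ} {K : ℝ}
    (hφ : Measurable φ) (hK : ∀ z, |φ z| ≤ K) :
    ∀ᵐ ω ∂μ, Tendsto (fun n : ℕ => (∑ i ∈ Finset.range n, φ (Y i ω)) / (n : ℝ)) atTop
      (nhds (∫ z, φ z ∂π)) := by
  set m := ∫ z, φ z ∂π
  have hmK : |m| ≤ K := by
    simpa using norm_integral_le_of_norm_le_const (μ := π) (f := φ) (ae_of_all _ hK)
  have hsubK z : |φ z - m| ≤ K + K := (abs_sub _ _).trans (add_le_add (hK z) hmK)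
  have hsub : Measurable fun z => φ z - m := hφ.sub_const m
  have hsum : Summable fun k => (K + K) * ((K - -K) * r ^ k) :=
    ((summable_geometric_of_lt_one hr0 hr1).mul_left _).mul_left _
  filter_upwards [ae_tendsto_average_zero_of_summable_correlations
    (fun j => (hsub.comp_aemeasurable (hY.aemeasurable j)).aestronglyMeasurable)
    (fun j ω => hsubK (Y j ω)) hsum fun i k =>
      hY.abs_integral_mul_sub_le hQ hsub hsubK hφ (fun z => abs_le.1 (hK z)) i k] with ω hω
  refine (zero_add m ▸ hω.add_const m).congr' ?_
  filter_upwards [eventually_gt_atTop 0] with n hn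
  simp only [Function.comp_apply]
  rw [Finset.sum_sub_distrib, Finset.sum_const, Finset.card_range, nsmul_eq_mul, sub_div,
    mul_div_cancel_left₀ _ (by positivity), sub_add_cancel]

end HasMarkovPairLaws

end PairLaws

section Overshoot

lemma isCenteredMinorized_comap_min {M h α : ℝ} (hM : 0 < M) (hh : 0 < h) (hα : 0 < α)
    {P : Kernel ℝ ℝ} (hstate : ∀ x ≤ M, P x (Ioi M) = 0)
    (hmino : ∀ x ≤ M, ∀ A, MeasurableSet A → ENNReal.ofReal α * unifIcc h A ≤ P x A)
    (hmean : ∀ x ≤ M, Integrable (fun y => y) (P x) ∧ ∫ y, y ∂(P x) = 0) :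
    IsCenteredMinorized (P.comap (min · M) (by fun_prop)) M h
      (ENNReal.ofReal α * (ENNReal.ofReal (2 * h))⁻¹) where
  pos_bound := hM
  pos_width := hh
  const_ne_zero := mul_ne_zero (by simpa using hα) (ENNReal.inv_ne_zero.2 ENNReal.ofReal_ne_top)
  apply_Ioi x := hstate _ (min_le_right x M)
  smul_volume_le x := by
    rw [mul_smul]
    exact Measure.le_iff.2 (hmino _ (min_le_right x M))
  integrable x := (hmean _ (min_le_right x M)).1
  mean_eq_zero x := (hmean _ (min_le_right x M)).2

variable {Ω : Type*} {m0 : MeasurableSpace Ω} {μ : Measure Ω} {X : ℕ → Ω → ℝ} {S0 : Ω → ℝ}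
  {ℱ : Filtration ℕ m0} {P : Kernel ℝ ℝ} [IsMarkovKernel P] {M h r : ℝ} {c : ENNReal}
  {π : Measure (ℝ × ℝ)}

namespace IsCenteredMinorized

section

variable [IsFiniteMeasure μ]

lemma hasMarkovPairLaws_upcrossState (hP : IsCenteredMinorized P M h c)
    (hZ : IsMarkovProcess μ ℱ (walkState X S0) (walkKernel P 1))
    (hM : ∀ l, 1 ≤ l → ∀ ω, X l ω ≤ M) :
    HasMarkovPairLaws μ (fun n => upcrossState X S0 (n + 1)) (clampedReturnKernel P M) where
  aemeasurable n := hP.aemeasurable_upcrossState hZ (n + 1)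
  map_prodMk := hP.map_upcrossState_prodMk hZ hM

lemma map_Oproc_succ (hP : IsCenteredMinorized P M h c)
    (hZ : IsMarkovProcess μ ℱ (walkState X S0) (walkKernel P 1)) (n : ℕ) :
    μ.map (Oproc X S0 (n + 1)) = (μ.map (upcrossState X S0 (n + 1))).snd := by
  rw [Oproc_succ, Measure.snd, AEMeasurable.map_map_of_aemeasurable measurable_snd.aemeasurable
    (hP.aemeasurable_upcrossState hZ (n + 1))]
  rfl

lemma map_Oproc_succ_Iic (hP : IsCenteredMinorized P M h c)
    (hZ : IsMarkovProcess μ ℱ (walkState X S0) (walkKernel P 1))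
    (hM : ∀ l, 1 ≤ l → ∀ ω, X l ω ≤ M) (n : ℕ) : μ.map (Oproc X S0 (n + 1)) (Iic 0) = 0 := by
  rw [hP.map_Oproc_succ hZ, Measure.snd_apply measurableSet_Iic, Measure.map_apply_of_aemeasurable
    (hP.aemeasurable_upcrossState hZ (n + 1)) (measurable_snd measurableSet_Iic)]
  refine measure_eq_zero_iff_ae_notMem.2 ?_
  filter_upwards [hP.ae_upcrossState_snd_mem_Ioc hZ hM n] with ω hω
  exact not_le.2 hω.1

end

variable [IsProbabilityMeasure μ]

lemma abs_measureReal_map_Oproc_succ_sub_le (hP : IsCenteredMinorized P M h c)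
    (hZ : IsMarkovProcess μ ℱ (walkState X S0) (walkKernel P 1))
    (hM : ∀ l, 1 ≤ l → ∀ ω, X l ω ≤ M) (hπ : UniformlyErgodic (clampedReturnKernel P M) π r)
    {A : Set ℝ} (hA : MeasurableSet A) (n : ℕ) :
    |(μ.map (Oproc X S0 (n + 1))).real A - π.snd.real A| ≤ r ^ n := by
  have := hP.isMarkovKernel_clampedReturnKernel
  rw [hP.map_Oproc_succ hZ, measureReal_def, measureReal_def, Measure.snd_apply hA,
    Measure.snd_apply hA]
  exact (hP.hasMarkovPairLaws_upcrossState hZ hM).abs_measureReal_map_sub_le hπ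
    (measurable_snd hA) n

variable [IsProbabilityMeasure π]

lemma snd_Iic_eq_zero (hP : IsCenteredMinorized P M h c)
    (hZ : IsMarkovProcess μ ℱ (walkState X S0) (walkKernel P 1))
    (hM : ∀ l, 1 ≤ l → ∀ ω, X l ω ≤ M) (hπ : UniformlyErgodic (clampedReturnKernel P M) π r)
    (hr0 : 0 ≤ r) (hr1 : r < 1) : π.snd (Iic 0) = 0 := by
  refine (measureReal_eq_zero_iff).1 (le_antisymm ?_ measureReal_nonneg)
  refine ge_of_tendsto' (tendsto_pow_atTop_nhds_zero_of_lt_one hr0 hr1) fun n => ?_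
  have hle := hP.abs_measureReal_map_Oproc_succ_sub_le hZ hM hπ (measurableSet_Iic (a := 0)) n
  rwa [measureReal_def, hP.map_Oproc_succ_Iic hZ hM, ENNReal.toReal_zero, zero_sub, abs_neg,
    abs_of_nonneg measureReal_nonneg] at hle

/-- `O₀` is not governed by the chain, whence the factor `2` and a rate that is
bounded away from `0`. -/
lemma abs_measureReal_map_Oproc_sub_le (hP : IsCenteredMinorized P M h c)
    (hZ : IsMarkovProcess μ ℱ (walkState X S0) (walkKernel P 1))
    (hM : ∀ l, 1 ≤ l → ∀ ω, X l ω ≤ M) (hπ : UniformlyErgodic (clampedReturnKernel P M) π r)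
    (hr0 : 0 ≤ r) {A : Set ℝ} (hA : MeasurableSet A) (n : ℕ) :
    |(μ.map (Oproc X S0 n)).real A - π.snd.real A| ≤ 2 * max r (1 / 2) ^ n := by
  cases n with
  | zero =>
    have hone : |(μ.map (Oproc X S0 0)).real A - π.snd.real A| ≤ 1 :=
      abs_sub_le_of_nonneg_of_le measureReal_nonneg measureReal_le_one measureReal_nonneg
        measureReal_le_one
    linarith [pow_zero (max r (1 / 2))]
  | succ n =>
    calc |(μ.map (Oproc X S0 (n + 1))).real A - π.snd.real A|
        ≤ r ^ n := hP.abs_measureReal_map_Oproc_succ_sub_le hZ hM hπ hA n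
      _ ≤ max r (1 / 2) ^ n := by gcongr; exact le_max_left _ _
      _ ≤ 2 * max r (1 / 2) * max r (1 / 2) ^ n :=
          le_mul_of_one_le_left (by positivity) (by linarith [le_max_right r (1 / 2)])
      _ = 2 * max r (1 / 2) ^ (n + 1) := by ring

lemma ae_tendsto_average_Oproc (hP : IsCenteredMinorized P M h c)
    (hZ : IsMarkovProcess μ ℱ (walkState X S0) (walkKernel P 1))
    (hM : ∀ l, 1 ≤ l → ∀ ω, X l ω ≤ M) (hπ : UniformlyErgodic (clampedReturnKernel P M) π r)
    (hr0 : 0 ≤ r) (hr1 : r < 1) {φ : ℝ → ℝ} {K : ℝ} (hφ : Measurable φ) (hK : ∀ u, |φ u| ≤ K) :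
    ∀ᵐ ω ∂μ, Tendsto (fun n : ℕ => (∑ j ∈ Finset.Icc 1 n, φ (Oproc X S0 j ω)) / (n : ℝ)) atTop
      (nhds (∫ u, φ u ∂π.snd)) := by
  have := hP.isMarkovKernel_clampedReturnKernel
  have hlim := (hP.hasMarkovPairLaws_upcrossState hZ hM).ae_tendsto_average hπ hr0 hr1
    (hφ.comp measurable_snd) fun z => hK z.2
  have hmean : ∫ u, φ u ∂π.snd = ∫ z, φ z.2 ∂π :=
    integral_map measurable_snd.aemeasurable hφ.aestronglyMeasurable
  have hsum n ω : ∑ j ∈ Finset.Icc 1 n, φ (Oproc X S0 j ω) =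
      ∑ i ∈ Finset.range n, φ (upcrossState X S0 (i + 1) ω).2 := by
    rw [← Finset.Ico_add_one_right_eq_Icc, Finset.sum_Ico_eq_sum_range]
    simp only [add_tsub_cancel_right, add_comm 1, Oproc_succ]
  simpa only [hmean, hsum, Function.comp_apply] using hlim

end IsCenteredMinorized

end Overshoot

/-- Stability of overshoots: under the minorization and zero conditional mean conditions,
`Law(Oₙ)` converges in total variation at a geometric rate to a probability measure `υ`
concentrated on `(0,∞)`, and ergodic averages of bounded measurable functions of the
overshoots converge almost surely. -/
theorem stmt11 {Ω : Type*} {m0 : MeasurableSpace Ω} {μ : Measure Ω} [IsProbabilityMeasure μ]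
    (M h α : ℝ) (hM : 0 < M) (hh : 0 < h) (hα : 0 < α)
    (P : Kernel ℝ ℝ) [IsMarkovKernel P]
    (hstate : ∀ x ≤ M, P x (Set.Ioi M) = 0)
    (hmino : ∀ x ≤ M, ∀ A : Set ℝ, MeasurableSet A →
      ENNReal.ofReal α * unifIcc h A ≤ P x A)
    (hmean : ∀ z ≤ M, Integrable (fun x => x) (P z) ∧ ∫ x, x ∂(P z) = 0)
    (ℱ : Filtration ℕ m0) (X : ℕ → Ω → ℝ) (S0 : Ω → ℝ)
    (hX : Adapted ℱ X) (hS0 : Measurable[ℱ 0] S0)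
    (hbound : ∀ n, 1 ≤ n → ∀ ω, X n ω ≤ M)
    (hMarkov : ∀ n : ℕ, ∀ A : Set ℝ, MeasurableSet A →
      (μ[fun ω => A.indicator (fun _ => (1 : ℝ)) (X (n + 1) ω) | ℱ n])
        =ᵐ[μ] fun ω => (P (X n ω) A).toReal) :
    ∃ υ : Measure ℝ, IsProbabilityMeasure υ ∧ υ (Set.Iic 0) = 0 ∧
      (∃ C r : ℝ, 0 ≤ C ∧ 0 ≤ r ∧ r < 1 ∧
        ∀ n : ℕ, ∀ A : Set ℝ, MeasurableSet A →
          |(μ.map (Oproc X S0 n) A).toReal - (υ A).toReal| ≤ C * r ^ n) ∧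
      ∀ φ : ℝ → ℝ, Measurable φ → (∃ K, ∀ u, |φ u| ≤ K) →
        ∀ᵐ ω ∂μ, Filter.Tendsto
          (fun n : ℕ => (∑ j ∈ Finset.Icc 1 n, φ (Oproc X S0 j ω)) / (n : ℝ))
          Filter.atTop (nhds (∫ u, φ u ∂υ)) := by
  have hP := isCenteredMinorized_comap_min hM hh hα hstate hmino hmean
  have hZ : IsMarkovProcess μ ℱ (walkState X S0) (walkKernel (P.comap (min · M) (by fun_prop)) 1) :=
    isMarkovProcess_walkState hX hS0 fun l hl A hA => by
      simpa only [Kernel.comap_apply, min_eq_left (hbound l hl _)] using hMarkov l A hA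
  obtain ⟨π, r, _, hr0, hr1, hπ⟩ := hP.exists_uniformlyErgodic_clampedReturnKernel
  refine ⟨π.snd, inferInstance, hP.snd_Iic_eq_zero hZ hbound hπ hr0 hr1,
    ⟨2, max r (1 / 2), zero_le_two, le_max_of_le_left hr0, max_lt hr1 one_half_lt_one,
      fun n A hA => hP.abs_measureReal_map_Oproc_sub_le hZ hbound hπ hr0 hA n⟩, ?_⟩
  rintro φ hφ ⟨K, hK⟩
  exact hP.ae_tendsto_average_Oproc hZ hbound hπ hr0 hr1 hφ hK
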